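/- Let T be an r-row rectangular fluctuating tableau with t := Σ_j |c_j| ≥ 1, and write std(T) = (μ^0, μ^1, …, μ^t). For every 1 ≤ i ≤ r−1 and a ∈ {1,…,t}: a is an antiexcedance of the permutation prom_i(T) if and only if either μ^a = μ^{a−1} + e_j for some j ≤ i (the a-th step of std(T) adds a box in one of the top i rows), or μ^a = μ^{a−1} − e_j for some j > i (the a-th step removes a box from one of the bottom r−i rows). In particular, if T is a rectangular standard tableau (type (1,1,…,1)), then the antiexcedances of prom_i(T) are exactly the entries appearing in the first i rows of T. -/

import Mathlib

open scoped Classical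

noncomputable section

namespace FT

/-- A (raw) `r`-row integer vector; generalized partitions are the antitone ones. -/
abbrev GP (r : ℕ) := Fin r → ℤ

/-- The weakly decreasing rearrangement of a tuple. -/
def sortDesc {r : ℕ} (α : GP r) : GP r := fun i => (α ∘ Tuple.sort α) i.rev

/-- Standard basis vector (0-indexed). -/
def eV {r : ℕ} (a : Fin r) : GP r := fun i => if i = a then 1 else 0

/-- Standard basis vector with 1-indexed row `a` (zero if out of range). -/
def eN (r : ℕ) (a : ℕ) : GP r := fun i => if (i : ℕ) + 1 = a then 1 else 0

/-- Indicator vector of a set of rows. -/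
def indV {r : ℕ} (S : Finset (Fin r)) : GP r := fun i => if i ∈ S then 1 else 0

/-- `colStep r c μ λ`: `λ` is obtained from `μ` by adding (if `c ≥ 0`) or removing
(if `c ≤ 0`) a skew column of `|c|` boxes. -/
def colStep (r : ℕ) (c : ℤ) (μ lam : GP r) : Prop :=
  ∃ S : Finset (Fin r), S.card = c.natAbs ∧
    (if 0 ≤ c then lam = μ + indV S else lam = μ - indV S)

/-- Skew fluctuating tableau of length `n` and type `c` (recorded at indices `0,…,n`;
values of `T` and `c` beyond those indices are irrelevant). -/
def IsSkewFT (r n : ℕ) (T : ℕ → GP r) (c : ℕ → ℤ) : Prop :=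
  (∀ k ≤ n, Antitone (T k)) ∧ ∀ j < n, colStep r (c j) (T j) (T (j + 1))

/-- (Non-skew) fluctuating tableau: starts at the empty shape. -/
def IsFT (r n : ℕ) (T : ℕ → GP r) (c : ℕ → ℤ) : Prop :=
  IsSkewFT r n T c ∧ T 0 = 0

/-- Rectangular: the final shape is constant. -/
def Rect (r n : ℕ) (T : ℕ → GP r) : Prop := ∃ m : ℤ, ∀ i, T n i = m

/-- Bender–Knuth involution `BK_i` (for `1 ≤ i ≤ n-1`). -/
def BK {r : ℕ} (i : ℕ) (T : ℕ → GP r) : ℕ → GP r :=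
  fun k => if k = i then sortDesc (T (i + 1) + T (i - 1) - T i) else T k

/-- `BKseg a m = BK (a+m-1) ∘ ⋯ ∘ BK a` (apply `BK a` first). -/
def BKseg {r : ℕ} (a : ℕ) : ℕ → (ℕ → GP r) → ℕ → GP r
  | 0 => id
  | m + 1 => BK (a + m) ∘ BKseg a m

/-- Promotion `P = BK_{n-1} ∘ ⋯ ∘ BK_1` on length-`n` tableaux. -/
def promo {r : ℕ} (n : ℕ) (T : ℕ → GP r) : ℕ → GP r := BKseg 1 (n - 1) T

/-- `BKsegRev a m = BK a ∘ ⋯ ∘ BK (a+m-1)` (apply `BK (a+m-1)` first). -/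
def BKsegRev {r : ℕ} (a : ℕ) : ℕ → (ℕ → GP r) → ℕ → GP r
  | 0 => id
  | m + 1 => BKsegRev a m ∘ BK (a + m)

/-- Inverse of promotion: `P⁻¹ = BK_1 ∘ ⋯ ∘ BK_{n-1}`. -/
def promoInv {r : ℕ} (n : ℕ) (T : ℕ → GP r) : ℕ → GP r := BKsegRev 1 (n - 1) T

def evacAux {r : ℕ} : ℕ → (ℕ → GP r) → ℕ → GP r
  | 0, T => T
  | m + 1, T => evacAux m (BKseg 1 (m + 1) T)

/-- Evacuation `E = BK_1 ∘ (BK_2∘BK_1) ∘ ⋯ ∘ (BK_{n-1}∘⋯∘BK_1)`. -/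
def evac {r : ℕ} (n : ℕ) (T : ℕ → GP r) : ℕ → GP r := evacAux (n - 1) T

def devacAux {r : ℕ} (n : ℕ) : ℕ → (ℕ → GP r) → ℕ → GP r
  | 0, T => T
  | m + 1, T => BKseg (n - (m + 1)) (m + 1) (devacAux n m T)

/-- Dual evacuation `E* = (BK_{n-1}∘⋯∘BK_1) ∘ (BK_{n-1}∘⋯∘BK_2) ∘ ⋯ ∘ BK_{n-1}`. -/
def devac {r : ℕ} (n : ℕ) (T : ℕ → GP r) : ℕ → GP r := devacAux n (n - 1) T

/-- `rev(-v)`. -/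
def revNeg {r : ℕ} (v : GP r) : GP r := fun i => - v i.rev

/-- Time reversal `τ`. -/
def tauT {r : ℕ} (n : ℕ) (T : ℕ → GP r) : ℕ → GP r := fun k => T (n - k)

/-- `ϖ`. -/
def varpiT {r : ℕ} (T : ℕ → GP r) : ℕ → GP r := fun k => revNeg (T k)

/-- `ε`. -/
def epsT {r : ℕ} (n : ℕ) (T : ℕ → GP r) : ℕ → GP r := fun k => revNeg (T (n - k))

/-- Sign of the `j`-th step of `T` (paper indexing: step `j` goes from `λ^{j-1}` to `λ^j`). -/
def sgnStep {r : ℕ} (T : ℕ → GP r) (j : ℕ) : ℤ :=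
  if T j = T (j - 1) then 0 else if T (j - 1) ≤ T j then 1 else -1

/-- The switch involution `toggle_j` (paper indexing, `1 ≤ j ≤ n`). -/
def toggleT {r : ℕ} (j : ℕ) (T : ℕ → GP r) : ℕ → GP r :=
  fun m => if m < j then T m else fun i => T m i - sgnStep T j

/-- Number of boxes added/removed in the step from `T j` to `T (j+1)`. -/
def stepSize {r : ℕ} (T : ℕ → GP r) (j : ℕ) : ℕ :=
  (Finset.univ.filter fun i : Fin r => T (j + 1) i ≠ T j i).card

/-- Cumulative step sizes: position of `T j` inside the oscillization. -/
def cum {r : ℕ} (T : ℕ → GP r) (j : ℕ) : ℕ := ∑ j' ∈ Finset.range j, stepSize T j'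

/-- The `j`-th intermediate shape of the oscillization of the skew-column step `μ → λ`:
boxes are added smallest-row-first and removed largest-row-first. -/
def oscStep {r : ℕ} (μ lam : GP r) (j : ℕ) : GP r := fun i =>
  let S := Finset.univ.filter fun i' : Fin r => lam i' ≠ μ i'
  if i ∈ S ∧ (if μ i < lam i then (S.filter fun i' => i' ≤ i).card ≤ j
              else (S.filter fun i' => i ≤ i').card ≤ j)
  then lam i else μ i

/-- Largest index `j ≤ n` with `cum T j ≤ k`. -/
def stdIdx {r : ℕ} (n : ℕ) (T : ℕ → GP r) (k : ℕ) : ℕ :=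
  ((Finset.range (n + 1)).filter fun j => cum T j ≤ k).sup id

/-- The oscillization `std(T)` of a length-`n` tableau, a tableau of length `t = Σ|c_j|`. -/
def stdT {r : ℕ} (n : ℕ) (T : ℕ → GP r) : ℕ → GP r := fun k =>
  if stdIdx n T k = n then T n
  else oscStep (T (stdIdx n T k)) (T (stdIdx n T k + 1)) (k - cum T (stdIdx n T k))

/-- Rows of the promotion–evacuation growth diagram: `PE t S u` is `P^u(S)`
for a length-`t` (oscillating) tableau `S`. -/
def PE {r : ℕ} (t : ℕ) (S : ℕ → GP r) (u : ℕ) : ℕ → GP r := (promo t)^[u] S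

/-- `i ∈ {1,…,r-1}` is recorded at cell `(u,v)` of the growth diagram of `S`
(rows 1-indexed; `λ^{u,v} = P^u(S)(v-u)`). -/
def recorded (r t : ℕ) (S : ℕ → GP r) (i u v : ℕ) : Prop :=
  ∃ a b : Fin r,
    (PE t S (u - 1) (v - u) = PE t S u (v - u - 1) + eV a ∧
     PE t S (u - 1) (v - u + 1) = PE t S u (v - u) + eV b ∧
     (a : ℕ) < i ∧ i ≤ (b : ℕ))
    ∨
    (PE t S u (v - u - 1) = PE t S (u - 1) (v - u) + eV a ∧
     PE t S u (v - u) = PE t S (u - 1) (v - u + 1) + eV b ∧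
     (b : ℕ) < i ∧ i ≤ (a : ℕ))

/-- `i ∈ PM(T)_{u,v}` for an off-diagonal entry of the promotion matrix of `T`
(`u, v ∈ {1,…,t}`, `1 ≤ i ≤ r-1`), using the oscillization `std(T)`. -/
def PMmem (r n t : ℕ) (T : ℕ → GP r) (i u v : ℕ) : Prop :=
  1 ≤ u ∧ u ≤ t ∧ 1 ≤ v ∧ v ≤ t ∧ u ≠ v ∧ 1 ≤ i ∧ i ≤ r - 1 ∧
    recorded r t (stdT n T) i u (if u < v then v else v + t)

/-- Graph of the partial promotion function `prom_i(T)`: `prom_i(T)(u) = v`.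
By convention `prom_0 = prom_r = id` on `{1,…,t}`. -/
def promRel (r n t : ℕ) (T : ℕ → GP r) (i u v : ℕ) : Prop :=
  if i = 0 ∨ i = r then 1 ≤ u ∧ u ≤ t ∧ u = v else PMmem r n t T i u v

/-- Sum of the first `i` entries (1-indexed prefix sums). -/
def pSum {r : ℕ} (v : GP r) (i : ℕ) : ℤ :=
  ∑ j ∈ Finset.univ.filter (fun j : Fin r => (j : ℕ) < i), v j

/-- The filled oscillized local-rule grid: row index `k` counts down from the top row
(`k = 0` is `std(λ → ν)`), column index `q` goes right; the left column is
`std(κ → λ)` read so that `grid cA κ λ ν k 0 = std(κ→λ)` at position `cA - k`. -/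
def grid {r : ℕ} (cA : ℕ) (κ lam ν : GP r) : ℕ → ℕ → GP r
  | 0, q => oscStep lam ν q
  | k + 1, 0 => oscStep κ lam (cA - (k + 1))
  | k + 1, q + 1 =>
      sortDesc (grid cA κ lam ν k (q + 1) + grid cA κ lam ν (k + 1) q -
        grid cA κ lam ν k q)
  termination_by k q => (k, q)

/-- 1-indexed entry of a vector (0 if out of range). -/
def ent {r : ℕ} (v : GP r) (h : ℕ) : ℤ := if hh : h - 1 < r then v ⟨h - 1, hh⟩ else 0

/-- The chain `j_0 = 1, j_h = ` least `h`-balance point of the lattice word of `T`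
weakly after `j_{h-1}` (in `{1,…,n}`), `none` once undefined. An index `j` is an
`h`-balance point iff `(T j)_h = (T j)_{h+1}` (1-indexed rows). -/
def jChain (r n : ℕ) (T : ℕ → GP r) : ℕ → Option ℕ
  | 0 => some 1
  | h + 1 =>
    match jChain r n T h with
    | none => none
    | some jp =>
      if H : ∃ j, jp ≤ j ∧ j ≤ n ∧ ent (T j) (h + 1) = ent (T j) (h + 2) then
        some (Nat.find H)
      else none

/-- `k`: the largest `h ≤ r-1` such that `j_1, …, j_h` are all defined. -/
def kVal (r n : ℕ) (T : ℕ → GP r) : ℕ :=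
  ((Finset.range r).filter fun h => (jChain r n T h).isSome).sup id

/-- `j_h`, defaulting to `0` when undefined. -/
def jval (r n : ℕ) (T : ℕ → GP r) (h : ℕ) : ℕ := (jChain r n T h).getD 0

/-- `ω_c` for `c ∈ {0,±1,…,±r}`: top-justified column of `c` ones if `c ≥ 0`,
bottom-justified column of `|c|` minus-ones if `c < 0`. -/
def omegaGP (r : ℕ) (c : ℤ) : GP r := fun i =>
  if 0 ≤ c then (if (i : ℕ) < c.natAbs then 1 else 0)
  else (if r - c.natAbs ≤ (i : ℕ) then -1 else 0)

/-- The extremal fluctuating tableau of type `c`: partial sums of the `ω_{c_j}`. -/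
def extremal (r : ℕ) (c : ℕ → ℤ) (k : ℕ) : GP r := ∑ j ∈ Finset.range k, omegaGP r (c j)

/-- Lexicographic order: the first nonzero entry of `β - α` is positive. -/
def ltLex {r : ℕ} (α β : GP r) : Prop := ∃ i : Fin r, (∀ j, j < i → α j = β j) ∧ α i < β i

/-- Cumulative sums of `|c_j|` (block boundaries). -/
def cumC (c : ℕ → ℤ) (j : ℕ) : ℕ := ∑ j' ∈ Finset.range j, (c j').natAbs

/-- Entry `(u,v)` (for `u,v ∈ {1,…,n}`) of the reduced promotion matrix `PMr^i(T)`: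
the number of cells in the block `B_u × B_v` whose promotion-matrix entry contains `i`. -/
def PMr (r n t : ℕ) (T : ℕ → GP r) (c : ℕ → ℤ) (i u v : ℕ) : ℕ :=
  (((Finset.Icc (cumC c (u - 1) + 1) (cumC c u)) ×ˢ
    (Finset.Icc (cumC c (v - 1) + 1) (cumC c v))).filter
      fun p => PMmem r n t T i p.1 p.2).card

/-- The set of `r`-row fluctuating tableaux of length `n`, shape `lam`, type `c`,
in bundled (finitely-indexed) form. -/
def FTset (r n : ℕ) (lam : GP r) (c : Fin n → ℤ) : Set (Fin (n + 1) → GP r) :=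
  {T | (∀ k, Antitone (T k)) ∧ T 0 = 0 ∧ T (Fin.last n) = lam ∧
       ∀ j : Fin n, colStep r (c j) (T j.castSucc) (T j.succ)}

/-!
Write `S = std(T)`. Each row of the growth diagram is obtained from the previous one by deleting
the first step of a path and replacing the rest by its dominant representative, that is, by
applying the discrete Pitman transforms of all simple roots. When `S` is rectangular, every shifted
path is a lowest weight path, so its dominant representative has the reversed endpoint; this forces
`P^t S = S`.

Down the column `a + t` of the diagram, the part of the horizontal increment lying in the first `i`
rows grows by one at each cell recording `i` and is otherwise constant. It starts from the last step
of `P^a S`, which adds `e_r` or removes `e_1`, and ends, by periodicity, at the `a`-th step of `S`.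
Hence `i` is recorded below the diagonal in that column exactly when the `a`-th step of `S` adds a
box to the first `i` rows, or removes one from the others. The duality `ϖ` reduces removals to
additions.
-/

/-! ### Discrete Pitman transforms -/

/-- Lattice paths: `η k j` is the `j`-th coordinate (0-indexed) at time `k`. -/
abbrev LatticePath := ℕ → ℕ → ℤ

/-- The running minimum `k ↦ min_{s ≤ k} f s`. -/
def runningMin (f : ℕ → ℤ) : ℕ → ℤ
  | 0 => f 0
  | k + 1 => min (runningMin f k) (f (k + 1))

/-- The pairing of the path `η` with the `i`-th simple coroot. -/
def gap (i : ℕ) (η : LatticePath) (k : ℕ) : ℤ := η k i - η k (i + 1)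

/-- The `i`-th simple root of type `A`. -/
def root (i : ℕ) : ℕ → ℤ := Pi.single i 1 - Pi.single (i + 1) 1

/-- The Pitman transform in direction `root i`: it reflects the path at its running minimum and so
makes it dominant in that direction. It moves a path to the top of its `i`-string. -/
def pitman (i : ℕ) (η : LatticePath) : LatticePath :=
  fun k => η k - runningMin (gap i η) k • root i

/-- Paths from the origin each of whose steps is `± e_S` for some set `S` of coordinates. -/
def IsUnitPath (η : LatticePath) : Prop :=
  η 0 = 0 ∧ ∀ k, (∀ j, η (k + 1) j - η k j = 0 ∨ η (k + 1) j - η k j = 1) ∨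
    ∀ j, η (k + 1) j - η k j = 0 ∨ η (k + 1) j - η k j = -1

section RunningMin

variable (f : ℕ → ℤ)

lemma runningMin_le (k : ℕ) : runningMin f k ≤ f k := by
  cases k with
  | zero => exact le_rfl
  | succ k => exact min_le_right _ _

lemma runningMin_antitone : Antitone (runningMin f) :=
  antitone_nat_of_succ_le fun _ => min_le_left _ _

variable {f}

lemma le_runningMin {k : ℕ} {c : ℤ} (h : ∀ s ≤ k, c ≤ f s) : c ≤ runningMin f k := by
  induction k with
  | zero => exact h 0 le_rfl
  | succ k ih => exact le_min (ih fun s hs => h s (by omega)) (h _ le_rfl)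

lemma runningMin_eq_of_forall_le {k s : ℕ} (hs : s ≤ k) (h : ∀ s' ≤ k, f s ≤ f s') :
    runningMin f k = f s :=
  le_antisymm ((runningMin_antitone f hs).trans (runningMin_le f s)) (le_runningMin h)

end RunningMin

section Root

variable (i : ℕ)

lemma root_self : root i i = 1 := by simp [root]

lemma root_succ : root i (i + 1) = -1 := by simp [root]

lemma root_of_ne {i x : ℕ} (h : x ≠ i) (h' : x ≠ i + 1) : root i x = 0 := by simp [root, h, h']

end Root

section Pitman

variable {η : LatticePath} {i j k : ℕ}

lemma pitman_apply (x : ℕ) :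
    pitman i η k x = η k x - runningMin (gap i η) k * root i x := rfl

lemma gap_pitman_self :
    gap i (pitman i η) k = gap i η k - 2 * runningMin (gap i η) k := by
  simp only [gap, pitman_apply, root_self, root_succ]; ring

lemma gap_succ_pitman :
    gap (i + 1) (pitman i η) k = gap (i + 1) η k + runningMin (gap i η) k := by
  simp only [gap, pitman_apply, root_succ, root_of_ne (show i + 1 + 1 ≠ i by omega)
    (show i + 1 + 1 ≠ i + 1 by omega)]
  ring

lemma gap_pitman_succ :
    gap i (pitman (i + 1) η) k = gap i η k + runningMin (gap (i + 1) η) k := by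
  simp only [gap, pitman_apply, root_self, root_of_ne (show i ≠ i + 1 by omega)
    (show i ≠ i + 1 + 1 by omega)]
  ring

lemma gap_pitman_of_far (h : i + 1 < j ∨ j + 1 < i) : gap i (pitman j η) = gap i η := by
  funext k
  simp only [gap, pitman_apply, root_of_ne (show i ≠ j by omega) (show i ≠ j + 1 by omega),
    root_of_ne (show i + 1 ≠ j by omega) (show i + 1 ≠ j + 1 by omega)]
  ring

lemma pitman_eq_self (h0 : η 0 = 0) (h : ∀ k, 0 ≤ gap i η k) : pitman i η = η := by
  funext k
  have hgap : gap i η 0 = 0 := by simp [gap, h0]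
  have hmin : runningMin (gap i η) k = 0 := by
    rw [runningMin_eq_of_forall_le (Nat.zero_le k) fun s _ => hgap ▸ h s, hgap]
  simp [pitman, hmin]

lemma pitman_comm (h : i + 1 < j) : pitman i (pitman j η) = pitman j (pitman i η) := by
  funext k
  have hi : gap i (pitman j η) = gap i η := gap_pitman_of_far (Or.inl h)
  have hj : gap j (pitman i η) = gap j η := gap_pitman_of_far (Or.inr h)
  rw [pitman, pitman, pitman, pitman, hi, hj]
  abel

namespace IsUnitPath

lemma gap_zero (h : IsUnitPath η) : gap i η 0 = 0 := by simp [gap, h.1]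

lemma gap_succ_mem (h : IsUnitPath η) (k : ℕ) :
    gap i η k - 1 ≤ gap i η (k + 1) ∧ gap i η (k + 1) ≤ gap i η k + 1 := by
  simp only [gap]
  rcases h.2 k with h | h <;> have h₁ := h i <;> have h₂ := h (i + 1) <;> omega

lemma runningMin_gap_nonpos (h : IsUnitPath η) : runningMin (gap i η) k ≤ 0 :=
  (runningMin_antitone _ (Nat.zero_le k)).trans_eq h.gap_zero

protected lemma pitman (h : IsUnitPath η) (i : ℕ) : IsUnitPath (pitman i η) := by
  refine ⟨by simp [FT.pitman, runningMin, h.gap_zero, h.1], fun k => ?_⟩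
  have hle : runningMin (gap i η) k ≤ η k i - η k (i + 1) := runningMin_le _ k
  have hsucc : runningMin (gap i η) (k + 1) =
    min (runningMin (gap i η) k) (η (k + 1) i - η (k + 1) (i + 1)) := rfl
  refine (h.2 k).imp (fun h j => ?_) fun h j => ?_ <;>
  · have hi := h i
    have hi' := h (i + 1)
    have hj := h j
    simp only [pitman_apply]
    by_cases hji : j = i
    · rw [hji, root_self]; omega
    by_cases hji' : j = i + 1
    · rw [hji', root_succ]; omega
    · rw [root_of_ne hji hji']; omega

end IsUnitPath

lemma pitman_idem (h : IsUnitPath η) (i : ℕ) : pitman i (pitman i η) = pitman i η := by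
  refine pitman_eq_self (h.pitman i).1 fun k => ?_
  have h₁ := runningMin_le (gap i η) k
  have h₂ : runningMin (gap i η) k ≤ 0 := h.runningMin_gap_nonpos
  rw [gap_pitman_self]
  omega

/-- The scalar identity behind the braid relation; the other conjuncts only serve to make
the induction go through. -/
lemma runningMin_braid {A B : ℕ → ℤ} (hA₀ : A 0 = 0) (hB₀ : B 0 = 0)
    (hA : ∀ k, A k - 1 ≤ A (k + 1) ∧ A (k + 1) ≤ A k + 1) (k : ℕ) :
    runningMin (fun k => A k - 2 * runningMin A k +
        runningMin (fun k => B k + runningMin A k) k) k =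
      runningMin (fun k => A k + runningMin B k) k - runningMin A k ∧
    (runningMin (fun k => B k + runningMin A k) k = runningMin A k + runningMin B k ∨
      runningMin (fun k => A k + runningMin B k) k = runningMin A k + runningMin B k) ∧
    runningMin A k + runningMin B k ≤ runningMin (fun k => B k + runningMin A k) k ∧
    runningMin A k + runningMin B k ≤ runningMin (fun k => A k + runningMin B k) k := by
  induction k with
  | zero => simp [runningMin, hA₀, hB₀]
  | succ k ih =>
    have hAk := runningMin_le A k
    have hAB := runningMin_le (fun k => A k + runningMin B k) k
    have hstep := hA k
    simp only [runningMin] at *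
    omega

lemma pitman_braid (h : IsUnitPath η) (i : ℕ) :
    pitman i (pitman (i + 1) (pitman i η)) = pitman (i + 1) (pitman i (pitman (i + 1) η)) := by
  have e₁ : gap (i + 1) (pitman i η) = fun k => gap (i + 1) η k + runningMin (gap i η) k :=
    funext fun _ => gap_succ_pitman
  have e₂ : gap i (pitman (i + 1) (pitman i η)) = fun k => gap i η k - 2 * runningMin (gap i η) k +
      runningMin (fun k => gap (i + 1) η k + runningMin (gap i η) k) k :=
    funext fun _ => by rw [gap_pitman_succ, e₁, gap_pitman_self]
  have e₃ : gap i (pitman (i + 1) η) = fun k => gap i η k + runningMin (gap (i + 1) η) k :=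
    funext fun _ => gap_pitman_succ
  have e₄ : gap (i + 1) (pitman i (pitman (i + 1) η)) =
      fun k => gap (i + 1) η k - 2 * runningMin (gap (i + 1) η) k +
        runningMin (fun k => gap i η k + runningMin (gap (i + 1) η) k) k :=
    funext fun _ => by rw [gap_succ_pitman, e₃, gap_pitman_self]
  funext k
  have c₁ := (runningMin_braid (h.gap_zero (i := i)) (h.gap_zero (i := i + 1)) h.gap_succ_mem k).1
  have c₂ := (runningMin_braid (h.gap_zero (i := i + 1)) (h.gap_zero (i := i)) h.gap_succ_mem k).1
  rw [pitman, pitman, pitman, pitman, pitman, pitman, e₂, e₄, e₁, e₃, c₁, c₂]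
  module

end Pitman

section ShiftReflect

variable {η : LatticePath} {i n : ℕ}

/-- The part of the path `η` after time `u`, translated to the origin. -/
def shift (u : ℕ) (η : LatticePath) : LatticePath := fun k => η (k + u) - η u

/-- The dual path: the first `n + 1` coordinates are reversed and all signs are changed. -/
def reflect (n : ℕ) (η : LatticePath) : LatticePath :=
  fun k x => -η k (if x ≤ n then n - x else x)

lemma shift_shift (u v : ℕ) (η : LatticePath) : shift v (shift u η) = shift (v + u) η := by
  funext k
  simp only [shift, add_assoc, sub_sub_sub_cancel_right]

lemma reflect_reflect (n : ℕ) (η : LatticePath) : reflect n (reflect n η) = η := by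
  funext k x
  simp only [reflect, neg_neg]
  congr 1
  split_ifs <;> omega

lemma shift_reflect (u n : ℕ) (η : LatticePath) :
    shift u (reflect n η) = reflect n (shift u η) := by
  funext k x
  simp only [shift, reflect, Pi.sub_apply]
  ring

namespace IsUnitPath

protected lemma shift (h : IsUnitPath η) (u : ℕ) : IsUnitPath (shift u η) := by
  refine ⟨by simp [FT.shift], fun k => ?_⟩
  simpa [FT.shift, add_right_comm k 1 u] using h.2 (k + u)

protected lemma reflect (h : IsUnitPath η) (n : ℕ) : IsUnitPath (reflect n η) := by
  refine ⟨funext fun x => by simp [FT.reflect, h.1], fun k => ?_⟩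
  simp only [FT.reflect]
  refine (h.2 k).symm.imp (fun h x => ?_) fun h x => ?_ <;>
  · have hx := h (if x ≤ n then n - x else x)
    omega

end IsUnitPath

lemma runningMin_shift {A : ℕ → ℤ} (hA : ∀ k, A k - 1 ≤ A (k + 1) ∧ A (k + 1) ≤ A k + 1)
    (u k : ℕ) :
    runningMin (fun k => A (k + u) - A u) k = runningMin A (k + u) - runningMin A u +
      runningMin (fun k => A (k + u) - 2 * runningMin A (k + u) - (A u - 2 * runningMin A u)) k ∧
    runningMin A (k + u) =
      min (runningMin A u) (runningMin (fun k => A (k + u) - A u) k + A u) := by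
  induction k with
  | zero =>
    have hu := runningMin_le A u
    simp only [runningMin, zero_add]
    omega
  | succ k ih =>
    have hAk := runningMin_le A (k + u)
    have hle := runningMin_le (fun k => A (k + u) - A u) k
    have hstep := hA (k + u)
    rw [show k + 1 + u = k + u + 1 by omega]
    simp only [runningMin, show k + 1 + u = k + u + 1 by omega] at *
    omega

lemma pitman_shift (h : IsUnitPath η) (i u : ℕ) :
    pitman i (shift u (pitman i η)) = pitman i (shift u η) := by
  have e₁ : gap i (shift u η) = fun k => gap i η (k + u) - gap i η u := by
    funext k; simp only [gap, shift, Pi.sub_apply]; ring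
  have e₂ : gap i (shift u (pitman i η)) = fun k =>
      gap i η (k + u) - 2 * runningMin (gap i η) (k + u) -
        (gap i η u - 2 * runningMin (gap i η) u) := by
    funext k
    rw [← gap_pitman_self, ← gap_pitman_self]
    simp only [gap, shift, Pi.sub_apply]; ring
  funext k
  rw [pitman, pitman, e₁, e₂, (runningMin_shift h.gap_succ_mem u k).1]
  simp only [shift, pitman]
  module

lemma gap_reflect (i j : ℕ) (η : LatticePath) : gap i (reflect (i + j + 1) η) = gap j η := by
  funext k
  simp only [gap, reflect, if_pos (show i ≤ i + j + 1 by omega),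
    if_pos (show i + 1 ≤ i + j + 1 by omega), show i + j + 1 - i = j + 1 by omega,
    show i + j + 1 - (i + 1) = j by omega]
  ring

lemma pitman_reflect (i j : ℕ) (η : LatticePath) :
    pitman i (reflect (i + j + 1) η) = reflect (i + j + 1) (pitman j η) := by
  funext k x
  have hroot : root i x = -root j (if x ≤ i + j + 1 then i + j + 1 - x else x) := by
    simp only [root, Pi.sub_apply, Pi.single_apply]
    split_ifs <;> omega
  rw [pitman_apply, gap_reflect, hroot]
  simp only [reflect, pitman_apply]
  ring

end ShiftReflect

section PitmanLongest

variable {η ξ : LatticePath} {i n : ℕ}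

/-- The composite `P_{n-1} ∘ ⋯ ∘ P_0` of Pitman transforms. -/
def pitmanCycle : ℕ → LatticePath → LatticePath
  | 0, η => η
  | n + 1, η => pitman n (pitmanCycle n η)

/-- The Pitman transform of the longest element of the symmetric group on `n + 1` letters, along
the reduced word that peels off one Coxeter cycle at a time. It sends a path to the dominant path
of its crystal component. -/
def pitmanLongest : ℕ → LatticePath → LatticePath
  | 0, η => η
  | n + 1, η => pitmanLongest n (pitmanCycle (n + 1) η)

protected lemma IsUnitPath.pitmanCycle (h : IsUnitPath η) (n : ℕ) :
    IsUnitPath (pitmanCycle n η) := by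
  induction n with
  | zero => exact h
  | succ n ih => exact ih.pitman n

lemma pitmanCycle_pitman_of_lt (η : LatticePath) (h : n < i) :
    pitmanCycle n (pitman i η) = pitman i (pitmanCycle n η) := by
  induction n with
  | zero => rfl
  | succ n ih => rw [pitmanCycle, pitmanCycle, ih (by omega), pitman_comm (by omega)]

lemma pitmanCycle_pitman_zero (h : IsUnitPath η) (n : ℕ) :
    pitmanCycle (n + 1) (pitman 0 η) = pitmanCycle (n + 1) η := by
  induction n with
  | zero => exact pitman_idem h 0
  | succ n ih => rw [pitmanCycle, ih, ← pitmanCycle]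

lemma pitmanCycle_pitman_succ (h : IsUnitPath η) (hi : i + 1 < n) :
    pitmanCycle n (pitman (i + 1) η) = pitman i (pitmanCycle n η) := by
  induction n with
  | zero => omega
  | succ n ih =>
    rcases Nat.lt_or_ge (i + 1) n with hlt | hge
    · rw [pitmanCycle, ih hlt, pitmanCycle, pitman_comm hlt]
    · obtain rfl : n = i + 1 := by omega
      simp only [pitmanCycle]
      rw [pitmanCycle_pitman_of_lt η (by omega), pitman_braid (h.pitmanCycle i)]

lemma pitmanLongest_pitman (h : IsUnitPath η) (hi : i < n) :
    pitmanLongest n (pitman i η) = pitmanLongest n η := by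
  induction n generalizing η i with
  | zero => omega
  | succ n ih =>
    cases i with
    | zero => rw [pitmanLongest, pitmanCycle_pitman_zero h, ← pitmanLongest]
    | succ i =>
      rw [pitmanLongest, pitmanCycle_pitman_succ h hi, ih (h.pitmanCycle _) (by omega),
        ← pitmanLongest]

/-- Dominance with respect to the first `n` simple roots. -/
def IsDominant (n : ℕ) (η : LatticePath) : Prop := ∀ i < n, ∀ k, 0 ≤ gap i η k

lemma IsDominant.pitmanCycle_eq (h₀ : η 0 = 0) (h : IsDominant n η) : pitmanCycle n η = η := by
  induction n with
  | zero => rfl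
  | succ n ih =>
    rw [pitmanCycle, ih fun i hi => h i (by omega), pitman_eq_self h₀ (h n n.lt_succ_self)]

lemma IsDominant.pitmanLongest_eq (h₀ : η 0 = 0) (h : IsDominant n η) :
    pitmanLongest n η = η := by
  induction n with
  | zero => rfl
  | succ n ih => rw [pitmanLongest, h.pitmanCycle_eq h₀, ih fun i hi => h i (by omega)]

/-- Two paths are Pitman equivalent if the Pitman transforms in the first `n` directions connect
them; this is equality of dominant representatives, phrased so as to be visibly preserved by
shifts. -/
def PitmanEquiv (n : ℕ) : LatticePath → LatticePath → Prop :=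
  Relation.EqvGen fun η ξ => IsUnitPath η ∧ ∃ i < n, ξ = pitman i η

namespace PitmanEquiv

protected lemma refl (n : ℕ) (η : LatticePath) : PitmanEquiv n η η := Relation.EqvGen.refl η

protected lemma symm (h : PitmanEquiv n η ξ) : PitmanEquiv n ξ η := Relation.EqvGen.symm _ _ h

protected lemma trans {ζ : LatticePath} (h : PitmanEquiv n η ξ) (h' : PitmanEquiv n ξ ζ) :
    PitmanEquiv n η ζ := Relation.EqvGen.trans _ _ _ h h'

protected lemma pitman (h : IsUnitPath η) (hi : i < n) : PitmanEquiv n η (pitman i η) :=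
  .rel _ _ ⟨h, i, hi, rfl⟩

protected lemma pitmanCycle (h : IsUnitPath η) {j : ℕ} (hj : j ≤ n) :
    PitmanEquiv n η (pitmanCycle j η) := by
  induction j with
  | zero => exact .refl n η
  | succ j ih => exact (ih (by omega)).trans (.pitman (h.pitmanCycle j) hj)

protected lemma shift (h : PitmanEquiv n η ξ) (u : ℕ) :
    PitmanEquiv n (shift u η) (shift u ξ) := by
  induction h with
  | rel η ξ h =>
    obtain ⟨hη, i, hi, rfl⟩ := h
    have hmid := PitmanEquiv.pitman ((hη.pitman i).shift u) hi
    rw [pitman_shift hη] at hmid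
    exact (PitmanEquiv.pitman (hη.shift u) hi).trans hmid.symm
  | refl η => exact .refl n _
  | symm _ _ _ ih => exact ih.symm
  | trans _ _ _ _ _ ih ih' => exact ih.trans ih'

protected lemma reflect (h : PitmanEquiv n η ξ) : PitmanEquiv n (reflect n η) (reflect n ξ) := by
  induction h with
  | rel η ξ h =>
    obtain ⟨hη, i, hi, rfl⟩ := h
    obtain ⟨j, rfl⟩ : ∃ j, n = j + i + 1 := ⟨n - 1 - i, by omega⟩
    rw [← pitman_reflect]
    exact .pitman (hη.reflect _) (by omega)
  | refl η => exact .refl n _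
  | symm _ _ _ ih => exact ih.symm
  | trans _ _ _ _ _ ih ih' => exact ih.trans ih'

lemma pitmanLongest_eq (h : PitmanEquiv n η ξ) : pitmanLongest n η = pitmanLongest n ξ := by
  induction h with
  | rel η ξ h =>
    obtain ⟨hη, i, hi, rfl⟩ := h
    exact (pitmanLongest_pitman hη hi).symm
  | refl η => rfl
  | symm _ _ _ ih => exact ih.symm
  | trans _ _ _ _ _ ih ih' => exact ih.trans ih'

end PitmanEquiv

end PitmanLongest

section LowestWeight

variable {η : LatticePath} {i j n L : ℕ}

/-- The path `η`, stopped at time `L`, is at the bottom of its `i`-string. -/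
def IsLowestAt (i L : ℕ) (η : LatticePath) : Prop := ∀ s ≤ L, gap i η L ≤ gap i η s

namespace IsLowestAt

lemma runningMin_gap (h : IsLowestAt i L η) : runningMin (gap i η) L = gap i η L :=
  runningMin_eq_of_forall_le le_rfl h

lemma pitman_endpoint (h : IsLowestAt i L η) (x : ℕ) :
    pitman i η L x = η L (Equiv.swap i (i + 1) x) := by
  rw [pitman_apply, h.runningMin_gap, gap]
  rcases eq_or_ne x i with rfl | hx
  · rw [root_self, Equiv.swap_apply_left]; ring
  rcases eq_or_ne x (i + 1) with rfl | hx'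
  · rw [root_succ, Equiv.swap_apply_right]; ring
  · rw [root_of_ne hx hx', Equiv.swap_apply_of_ne_of_ne hx hx']; ring

lemma pitman_of_far (hij : i + 1 < j ∨ j + 1 < i) (h : IsLowestAt i L η) :
    IsLowestAt i L (pitman j η) := by
  rwa [IsLowestAt, gap_pitman_of_far hij]

lemma succ_pitman (h : IsLowestAt (i + 1) L η) : IsLowestAt (i + 1) L (pitman i η) := by
  intro s hs
  rw [gap_succ_pitman, gap_succ_pitman]
  exact add_le_add (h s hs) (runningMin_antitone _ hs)

lemma pitman_succ_pitman (hi : IsLowestAt i L η) (hi' : IsLowestAt (i + 1) L η) :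
    IsLowestAt i L (pitman (i + 1) (pitman i η)) := by
  intro s hs
  have hmin : gap (i + 1) η L + runningMin (gap i η) s ≤
      runningMin (gap (i + 1) (pitman i η)) s := by
    refine le_runningMin fun s' hs' => ?_
    rw [gap_succ_pitman]
    exact add_le_add (hi' s' (hs'.trans hs)) (runningMin_antitone _ hs')
  have hs' := runningMin_le (gap i η) s
  rw [gap_pitman_succ, gap_pitman_succ, gap_pitman_self, gap_pitman_self, hi.runningMin_gap,
    hi'.succ_pitman.runningMin_gap, gap_succ_pitman, hi.runningMin_gap]
  omega

lemma pitmanCycle_of_le (h : ∀ i < n, IsLowestAt i L η) (hji : j ≤ i) (hi : i < n) :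
    IsLowestAt i L (pitmanCycle j η) := by
  induction j with
  | zero => exact h i hi
  | succ j ih =>
    rcases hji.eq_or_lt with rfl | hlt
    · exact (ih (by omega)).succ_pitman
    · exact (ih (by omega)).pitman_of_far (Or.inr hlt)

lemma pitmanCycle_of_lt (h : ∀ i < n, IsLowestAt i L η) (hij : i + 1 < j) (hj : j ≤ n) :
    IsLowestAt i L (pitmanCycle j η) := by
  induction j with
  | zero => omega
  | succ j ih =>
    rcases Nat.lt_or_ge (i + 1) j with hlt | hge
    · exact (ih hlt (by omega)).pitman_of_far (Or.inl hlt)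
    · obtain rfl : j = i + 1 := by omega
      exact pitman_succ_pitman (pitmanCycle_of_le h le_rfl (by omega))
        (pitmanCycle_of_le h (Nat.le_succ i) (by omega))

end IsLowestAt

lemma pitmanCycle_apply_of_lt (η : LatticePath) (k : ℕ) {x : ℕ} (h : n < x) :
    pitmanCycle n η k x = η k x := by
  induction n with
  | zero => rfl
  | succ n ih =>
    rw [pitmanCycle, pitman_apply, root_of_ne (by omega) (by omega), ih (by omega)]
    ring

lemma pitmanLongest_apply_of_lt (η : LatticePath) (k : ℕ) {x : ℕ} (h : n < x) :
    pitmanLongest n η k x = η k x := by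
  induction n generalizing η with
  | zero => rfl
  | succ n ih => rw [pitmanLongest, ih _ (by omega), pitmanCycle_apply_of_lt _ _ h]

lemma pitmanCycle_endpoint (h : ∀ i < n, IsLowestAt i L η) (hj : j ≤ n) :
    (∀ x < j, pitmanCycle j η L x = η L (x + 1)) ∧ pitmanCycle j η L j = η L 0 := by
  induction j with
  | zero => exact ⟨fun x hx => absurd hx x.not_lt_zero, rfl⟩
  | succ j ih =>
    obtain ⟨hlt, hself⟩ := ih (by omega)
    have hlow : IsLowestAt j L (pitmanCycle j η) := .pitmanCycle_of_le h le_rfl hj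
    simp only [pitmanCycle, hlow.pitman_endpoint, Equiv.swap_apply_right, hself, and_true]
    intro x hx
    rcases Nat.lt_succ_iff_lt_or_eq.mp hx with hx | rfl
    · rw [Equiv.swap_apply_of_ne_of_ne (by omega) (by omega), hlt x hx]
    · rw [Equiv.swap_apply_left, pitmanCycle_apply_of_lt η L x.lt_succ_self]

lemma pitmanLongest_endpoint (h : ∀ i < n, IsLowestAt i L η) {x : ℕ} (hx : x ≤ n) :
    pitmanLongest n η L x = η L (n - x) := by
  induction n generalizing η x with
  | zero => rw [Nat.le_zero.mp hx]; rfl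
  | succ n ih =>
    obtain ⟨hlt, hself⟩ := pitmanCycle_endpoint h le_rfl
    rcases hx.eq_or_lt with rfl | hx
    · rw [pitmanLongest, pitmanLongest_apply_of_lt _ _ n.lt_succ_self, hself, Nat.sub_self]
    · rw [pitmanLongest, ih (fun i hi => .pitmanCycle_of_lt h (by omega) le_rfl)
        (by omega), hlt _ (by omega), Nat.succ_sub (by omega)]

end LowestWeight

section Slide

variable {n j : ℕ} {s : LatticePath} {β : ℕ → ℕ}

/-- Removing a unit from coordinate `β k` of the dominant path `s` at each time `k`, where the
coordinate `β` starts at `0` and slides down along blocks of equal coordinates of `s`, always to the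
end of a block. Promotion of an oscillating tableau removes boxes in this way. -/
structure IsSlide (n : ℕ) (s : LatticePath) (β : ℕ → ℕ) : Prop where
  start : s 0 = Pi.single 0 1
  start_row : β 0 = 0
  dominant : IsDominant n s
  mono : ∀ k, β k ≤ β (k + 1)
  block : ∀ k x, β k ≤ x → x ≤ β (k + 1) → s (k + 1) x = s (k + 1) (β k)
  corner : ∀ k, β k < n → 0 < gap (β k) s k

namespace IsSlide

lemma gap_sub_single (k : ℕ) :
    gap j (fun k => s k - Pi.single (min (β k) j) 1) k =
      gap j s k - if j ≤ β k then 1 else 0 := by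
  simp only [gap, Pi.sub_apply, Pi.single_apply, eq_comm (a := j), min_eq_right_iff,
    if_neg (show ¬ j + 1 = min (β k) j by omega)]
  ring

lemma runningMin_gap (h : IsSlide n s β) (hj : j < n) (k : ℕ) :
    runningMin (gap j (fun k => s k - Pi.single (min (β k) j) 1)) k =
      if j < β k then -1 else 0 := by
  induction k with
  | zero =>
    rw [runningMin, gap]
    simp [h.start, h.start_row]
  | succ k ih =>
    have hmono := h.mono k
    have hdom := h.dominant j hj (k + 1)
    rw [runningMin, ih, gap_sub_single]
    rcases lt_trichotomy j (β (k + 1)) with hlt | heq | hgt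
    · rw [if_pos hlt, if_pos hlt.le]
      by_cases hjk : j < β k
      · rw [if_pos hjk]; omega
      · have hblock : gap j s (k + 1) = 0 := by
          rw [gap, h.block k j (by omega) hlt.le, h.block k (j + 1) (by omega) hlt, sub_self]
        rw [if_neg hjk, hblock]; rfl
    · have hcorner := h.corner (k + 1) (by omega)
      rw [← heq] at hcorner
      rw [if_neg (by omega), if_pos heq.le, if_neg heq.not_lt]
      omega
    · rw [if_neg (by omega), if_neg (by omega), if_neg hgt.not_gt]
      omega

lemma pitmanCycle_eq (h : IsSlide n s β) (hj : j ≤ n) :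
    pitmanCycle j (fun k => s k - Pi.single 0 1) = fun k => s k - Pi.single (min (β k) j) 1 := by
  induction j with
  | zero => simp only [pitmanCycle, Nat.min_zero]
  | succ j ih =>
    funext k
    rw [pitmanCycle, ih (by omega), pitman, h.runningMin_gap hj, root]
    split_ifs with hlt
    · rw [min_eq_right hlt.le, min_eq_right (Nat.succ_le_of_lt hlt)]
      module
    · rw [min_eq_left (by omega : β k ≤ j), min_eq_left (by omega : β k ≤ j + 1)]
      module

end IsSlide

end Slide

/-! ### Promotion of oscillating tableaux -/

section Shapes

variable {r : ℕ} {D E : GP r} {a b b' : Fin r}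

lemma eV_self (a : Fin r) : eV a a = 1 := if_pos rfl

lemma eV_of_ne (h : b ≠ a) : eV a b = 0 := if_neg h

lemma eV_injective : Function.Injective (eV : Fin r → GP r) := fun a b h => by
  by_contra hab
  simpa [eV_self, eV_of_ne hab] using congrFun h a

lemma revNeg_add (D E : GP r) : revNeg (D + E) = revNeg D + revNeg E :=
  funext fun _ => neg_add _ _

lemma revNeg_neg (D : GP r) : revNeg (-D) = -revNeg D := rfl

lemma revNeg_sub (D E : GP r) : revNeg (D - E) = revNeg D - revNeg E := by
  rw [sub_eq_add_neg, revNeg_add, revNeg_neg, sub_eq_add_neg]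

lemma revNeg_revNeg (D : GP r) : revNeg (revNeg D) = D := by
  funext x; simp [revNeg]

lemma revNeg_eV (a : Fin r) : revNeg (eV a) = -eV a.rev := by
  funext x
  simp only [revNeg, eV, Pi.neg_apply, Fin.rev_eq_iff]

lemma antitone_revNeg (hD : Antitone D) : Antitone (revNeg D) :=
  fun _ _ hxy => neg_le_neg (hD (Fin.rev_le_rev.mpr hxy))

lemma varpiT_varpiT (S : ℕ → GP r) : varpiT (varpiT S) = S := funext fun _ => revNeg_revNeg _

lemma antitone_sub_eV (hD : Antitone D) (hb : ∀ j, b < j → D j < D b) : Antitone (D - eV b) := by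
  intro x y hxy
  have hle := hD hxy
  have hlt := hb y
  simp only [Pi.sub_apply, eV]
  grind

lemma val_eq_zero_of_antitone_add_eV {m : ℤ} (hD : ∀ x, D x = m) (h : Antitone (D + eV a)) :
    (a : ℕ) = 0 := by
  by_contra ha
  have hlt : (⟨0, by omega⟩ : Fin r) < a := by rw [Fin.lt_def]; simp only; omega
  have hle := h hlt.le
  rw [Pi.add_apply, Pi.add_apply, hD, hD, eV_self, eV_of_ne hlt.ne] at hle
  omega

lemma sortDesc_antitone (D : GP r) : Antitone (sortDesc D) :=
  fun _ _ hxy => Tuple.monotone_sort D (Fin.rev_le_rev.mpr hxy)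

lemma sortDesc_eq {σ : Equiv.Perm (Fin r)} (hσ : Antitone (D ∘ σ)) : sortDesc D = D ∘ σ := by
  have hmono : Monotone (D ∘ (Fin.revPerm.trans σ : Equiv.Perm (Fin r))) :=
    fun x y hxy => hσ (Fin.rev_le_rev.mpr hxy)
  have hsort := Tuple.comp_sort_eq_comp_iff_monotone.mpr hmono
  funext x
  simpa [sortDesc] using (congrFun hsort x.rev).symm

lemma sortDesc_revNeg (D : GP r) : sortDesc (revNeg D) = revNeg (sortDesc D) := by
  let σ : Equiv.Perm (Fin r) := (Tuple.sort D).trans Fin.revPerm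
  have hσ : revNeg D ∘ σ = revNeg (sortDesc D) := by
    funext x
    simp [σ, revNeg, sortDesc]
  rw [← hσ]
  exact sortDesc_eq (hσ ▸ antitone_revNeg (sortDesc_antitone D))

lemma exists_sortDesc_sub_eV (hD : Antitone D) (b : Fin r) :
    ∃ b', b ≤ b' ∧ D b = D b' ∧ (∀ j, b' < j → D j < D b') ∧
      sortDesc (D - eV b) = D - eV b' := by
  obtain ⟨b', hb', hmax⟩ := Finset.exists_max_image
    (Finset.univ.filter fun x : Fin r => D x = D b) id ⟨b, by simp⟩
  simp only [Finset.mem_filter, Finset.mem_univ, true_and, id] at hb' hmax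
  have hcorner : ∀ j, b' < j → D j < D b' := fun j hj =>
    (hD hj.le).lt_of_ne fun h => (hmax j (h.trans hb')).not_gt hj
  have hswap : (D - eV b) ∘ Equiv.swap b b' = D - eV b' := by
    funext x
    simp only [Function.comp_apply, Pi.sub_apply, eV, Equiv.swap_apply_eq_iff,
      Equiv.swap_apply_left]
    congr 1
    rcases eq_or_ne x b with rfl | hx
    · rw [Equiv.swap_apply_left, hb']
    rcases eq_or_ne x b' with rfl | hx'
    · rw [Equiv.swap_apply_right, hb']
    · rw [Equiv.swap_apply_of_ne_of_ne hx hx']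
  refine ⟨b', hmax b rfl, hb'.symm, hcorner, ?_⟩
  rw [← hswap]
  exact sortDesc_eq (hswap ▸ antitone_sub_eV hD hcorner)

/-- `E` is obtained from `D` by adding or removing one box. -/
def IsUnitStep (D E : GP r) : Prop := ∃ d, E = D + eV d ∨ D = E + eV d

lemma IsUnitStep.revNeg (h : IsUnitStep D E) : IsUnitStep (revNeg D) (revNeg E) := by
  obtain ⟨d, h⟩ := h
  refine ⟨d.rev, h.symm.imp ?_ ?_⟩ <;> rintro rfl <;>
    rw [revNeg_add, revNeg_eV, neg_add_cancel_right]

/-- The local rule of the growth diagram preserves single-box steps. -/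
lemma IsUnitStep.sub_eV (h : IsUnitStep D E) (hb : b ≤ b') (hE : E b = E b')
    (hD : ∀ j, b < j → D j < D b) : IsUnitStep (D - eV b) (E - eV b') := by
  obtain ⟨d, h⟩ := h
  rcases hb.eq_or_lt with rfl | hlt
  · refine ⟨d, h.imp ?_ ?_⟩ <;> rintro rfl <;> abel
  have hcorner := hD b' hlt
  rcases h with rfl | rfl
  · obtain rfl : b' = d := by
      simp only [Pi.add_apply, eV] at hE
      grind
    exact ⟨b, Or.inl (by abel)⟩
  · obtain rfl : b = d := by
      simp only [Pi.add_apply, eV] at hcorner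
      grind
    exact ⟨b', Or.inr (by abel)⟩

end Shapes

section Promotion

variable {r t : ℕ} {S R : ℕ → GP r} {b : ℕ → Fin r}

lemma BK_varpiT (i : ℕ) (S : ℕ → GP r) : BK i (varpiT S) = varpiT (BK i S) := by
  funext k
  simp only [BK, varpiT, ← revNeg_add, ← revNeg_sub, sortDesc_revNeg, apply_ite revNeg]

lemma promo_varpiT (t : ℕ) (S : ℕ → GP r) : promo t (varpiT S) = varpiT (promo t S) := by
  have hseg (m : ℕ) : BKseg 1 m (varpiT S) = varpiT (BKseg 1 m S) := by
    induction m with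
    | zero => rfl
    | succ m ih => simp only [BKseg, Function.comp_apply, ih, BK_varpiT]
  exact hseg _

lemma BKseg_apply_of_notMem (S : ℕ → GP r) {m k : ℕ} (h : k = 0 ∨ m < k) :
    BKseg 1 m S k = S k := by
  induction m with
  | zero => rfl
  | succ m ih => rw [BKseg, Function.comp_apply, BK, if_neg (by omega), ih (by omega)]

lemma BKseg_apply_succ (S : ℕ → GP r) {m k : ℕ} (h : k < m) :
    BKseg 1 m S (k + 1) = sortDesc (S (k + 2) + BKseg 1 m S k - S (k + 1)) := by
  induction m with
  | zero => omega
  | succ m ih =>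
    simp only [BKseg, Function.comp_apply, BK]
    rcases Nat.lt_succ_iff_lt_or_eq.mp h with hlt | rfl
    · rw [if_neg (by omega), if_neg (by omega), ih hlt]
    · rw [if_pos (add_comm k 1), if_neg (by omega), add_comm 1 k, Nat.add_sub_cancel,
        BKseg_apply_of_notMem S (Or.inr (by omega : k < k + 1 + 1)),
        BKseg_apply_of_notMem S (Or.inr (by omega : k < k + 1))]

lemma promo_zero (t : ℕ) (S : ℕ → GP r) : promo t S 0 = S 0 :=
  BKseg_apply_of_notMem S (Or.inl rfl)

lemma promo_self (t : ℕ) (S : ℕ → GP r) : promo t S t = S t :=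
  BKseg_apply_of_notMem S (by omega)

lemma promo_succ (S : ℕ → GP r) {k : ℕ} (h : k + 1 < t) :
    promo t S (k + 1) = sortDesc (S (k + 2) + promo t S k - S (k + 1)) :=
  BKseg_apply_succ S (by omega)

/-- Oscillating tableaux of length `t`: fluctuating tableaux all of whose steps are single boxes. -/
structure IsOscillating (t : ℕ) (S : ℕ → GP r) : Prop where
  zero : S 0 = 0
  antitone : ∀ k ≤ t, Antitone (S k)
  step : ∀ k < t, IsUnitStep (S k) (S (k + 1))

protected lemma IsOscillating.varpiT (hS : IsOscillating t S) : IsOscillating t (varpiT S) where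
  zero := by rw [FT.varpiT, hS.zero]; exact funext fun _ => neg_zero
  antitone k hk := antitone_revNeg (hS.antitone k hk)
  step k hk := (hS.step k hk).revNeg

/-- `R` is the row below `S` in a growth diagram, in the case where the first step of `S` adds a
box: `b k` is the row of the box by which `S (k + 1)` exceeds `R k`. -/
structure IsAddRow (t : ℕ) (S R : ℕ → GP r) (b : ℕ → Fin r) : Prop where
  start : (b 0 : ℕ) = 0
  eq_add : ∀ k < t, S (k + 1) = R k + eV (b k)
  corner : ∀ k < t, ∀ j, b k < j → S (k + 1) j < S (k + 1) (b k)
  mono : ∀ k, k + 1 < t → b k ≤ b (k + 1)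
  block : ∀ k, k + 1 < t → S (k + 2) (b k) = S (k + 2) (b (k + 1))

lemma IsAddRow.eq_sub (h : IsAddRow t S R b) {k : ℕ} (hk : k < t) : R k = S (k + 1) - eV (b k) :=
  eq_sub_of_add_eq (h.eq_add k hk).symm

lemma IsOscillating.of_isAddRow (hS : IsOscillating t S) (h : IsAddRow t S R b) (h₀ : R 0 = 0)
    (ht : R t = S t) : IsOscillating t R where
  zero := h₀
  antitone k hk := by
    rcases hk.eq_or_lt with rfl | hlt
    · exact ht ▸ hS.antitone k le_rfl
    · rw [h.eq_sub hlt]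
      exact antitone_sub_eV (hS.antitone _ hlt) (h.corner k hlt)
  step k hk := by
    rcases (Nat.succ_le_of_lt hk).eq_or_lt with rfl | hlt
    · exact ⟨b k, Or.inl (ht.trans (h.eq_add k hk))⟩
    · rw [h.eq_sub hk, h.eq_sub hlt]
      exact (hS.step _ hlt).sub_eV (h.mono k hlt) (h.block k hlt) (h.corner k hk)

lemma IsOscillating.exists_isAddRow_of_eq_eV (hS : IsOscillating t S) (ht : 0 < t) {d : Fin r}
    (h : S 1 = eV d) : ∃ b, IsAddRow t S (promo t S) b := by
  have hslide (k : ℕ) (d : Fin r) : ∃ d', k + 1 < t → d ≤ d' ∧ S (k + 2) d = S (k + 2) d' ∧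
      (∀ j, d' < j → S (k + 2) j < S (k + 2) d') ∧
      sortDesc (S (k + 2) - eV d) = S (k + 2) - eV d' := by
    by_cases hk : k + 1 < t
    · exact (exists_sortDesc_sub_eV (hS.antitone _ hk) d).imp fun _ h _ => h
    · exact ⟨d, fun h => absurd h hk⟩
  choose next hnext using hslide
  let b : ℕ → Fin r := Nat.rec d next
  have hd : (d : ℕ) = 0 := by
    refine val_eq_zero_of_antitone_add_eV (D := 0) (fun _ => rfl) ?_
    rw [zero_add, ← h]
    exact hS.antitone 1 ht
  refine ⟨b, hd, fun k => ?_, fun k hk => ?_, fun k hk => (hnext k (b k) hk).1,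
    fun k hk => (hnext k (b k) hk).2.1⟩
  · induction k with
    | zero => intro _; rw [promo_zero, hS.zero, zero_add, zero_add]; exact h
    | succ k ih =>
      intro hk
      have hdiff : S (k + 2) + promo t S k - S (k + 1) = S (k + 2) - eV (b k) := by
        rw [ih (by omega)]; abel
      rw [promo_succ S hk, hdiff, (hnext k (b k) hk).2.2.2]
      exact (sub_add_cancel _ _).symm
  · cases k with
    | zero =>
      intro j (hj : d < j)
      change S 1 j < S 1 d
      rw [h, eV_of_ne hj.ne', eV_self]
      exact zero_lt_one
    | succ k => exact (hnext k (b k) hk).2.2.1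

/-- The two cases are that the first step of `S` adds, resp. removes, a box. -/
lemma IsOscillating.exists_isAddRow (hS : IsOscillating t S) (ht : 0 < t) :
    (∃ b, IsAddRow t S (promo t S) b) ∨
      ∃ b, IsAddRow t (varpiT S) (varpiT (promo t S)) b := by
  obtain ⟨d, hd | hd⟩ := hS.step 0 ht
  · simp only [hS.zero, zero_add] at hd
    exact .inl (hS.exists_isAddRow_of_eq_eV ht hd)
  · have hd' : varpiT S 1 = eV d.rev := by
      rw [varpiT, eq_neg_of_add_eq_zero_left (hd.symm.trans hS.zero), revNeg_neg, revNeg_eV,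
        neg_neg]
    rw [← promo_varpiT]
    exact .inr (hS.varpiT.exists_isAddRow_of_eq_eV ht hd')

protected lemma IsOscillating.promo (hS : IsOscillating t S) (ht : 0 < t) :
    IsOscillating t (promo t S) := by
  have of_isAddRow {S : ℕ → GP r} {b : ℕ → Fin r} (hS : IsOscillating t S)
      (h : IsAddRow t S (FT.promo t S) b) : IsOscillating t (FT.promo t S) :=
    hS.of_isAddRow h ((promo_zero t S).trans hS.zero) (promo_self t S)
  obtain ⟨b, h⟩ | ⟨b, h⟩ := hS.exists_isAddRow ht
  · exact of_isAddRow hS h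
  · rw [← promo_varpiT] at h
    rw [← varpiT_varpiT (FT.promo t S), ← promo_varpiT]
    exact (of_isAddRow hS.varpiT h).varpiT

end Promotion

section Periodicity

variable {r t u a : ℕ} {S R : ℕ → GP r} {b : ℕ → Fin r}

/-- The lattice path traced by a tableau of length `t`, constant after time `t`. -/
def toPath (t : ℕ) (S : ℕ → GP r) : LatticePath :=
  fun k x => if hx : x < r then S (min k t) ⟨x, hx⟩ else 0

lemma toPath_apply (t : ℕ) (S : ℕ → GP r) (k : ℕ) (x : Fin r) : toPath t S k x = S (min k t) x :=
  dif_pos x.isLt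

lemma toPath_apply_of_le (t : ℕ) (S : ℕ → GP r) (k : ℕ) {x : ℕ} (hx : r ≤ x) :
    toPath t S k x = 0 := dif_neg hx.not_gt

lemma gap_toPath (t : ℕ) (S : ℕ → GP r) (k : ℕ) {i : ℕ} (hi : i + 1 < r) :
    gap i (toPath t S) k = S (min k t) ⟨i, by omega⟩ - S (min k t) ⟨i + 1, hi⟩ := by
  simp only [gap, toPath, dif_pos hi, dif_pos (show i < r by omega)]

lemma toPath_varpiT (t : ℕ) (S : ℕ → GP r) :
    toPath t (varpiT S) = reflect (r - 1) (toPath t S) := by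
  funext k x
  rw [reflect]
  rcases Nat.lt_or_ge x r with hx | hx
  · have hrev : r - 1 - x = (Fin.rev ⟨x, hx⟩ : Fin r) := by
      simp only [Fin.val_rev]; omega
    rw [if_pos (by omega), hrev, toPath_apply, toPath, dif_pos hx]
    rfl
  · rw [toPath_apply_of_le _ _ _ hx, toPath_apply_of_le _ _ _ (by split_ifs <;> omega), neg_zero]

lemma isUnitPath_toPath (h₀ : S 0 = 0) (hstep : ∀ k < t, IsUnitStep (S k) (S (k + 1))) :
    IsUnitPath (toPath t S) := by
  refine ⟨funext fun x => by simp [toPath, h₀], fun k => ?_⟩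
  rcases Nat.lt_or_ge k t with hk | hk
  · have hmin : min (k + 1) t = k + 1 ∧ min k t = k := by omega
    simp only [toPath, hmin]
    obtain ⟨d, hd | hd⟩ := hstep k hk
    · left
      intro x
      simp only [hd, Pi.add_apply, eV]
      grind
    · right
      intro x
      simp only [hd, Pi.add_apply, eV]
      grind
  · exact .inl fun x => .inl (by simp [toPath, hk, Nat.le_succ_of_le hk])

lemma IsOscillating.isUnitPath (hS : IsOscillating t S) {L : ℕ} (hL : L ≤ t) :
    IsUnitPath (toPath L S) :=
  isUnitPath_toPath hS.zero fun k hk => hS.step k (by omega)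

lemma toPath_eq_sub_single {L L' k k' : ℕ} {d : Fin r}
    (h : S (min k' L') = R (min k L) + eV d) :
    toPath L R k = toPath L' S k' - Pi.single (d : ℕ) 1 := by
  funext x
  simp only [toPath, Pi.sub_apply, h, Pi.add_apply, eV, Pi.single_apply, Fin.ext_iff]
  grind

lemma IsAddRow.isSlide (h : IsAddRow t S R b) (hS : IsOscillating t S) (hR : R 0 = 0) {L : ℕ}
    (hL : L < t) :
    IsSlide (r - 1) (fun k => toPath (L + 1) S (k + 1)) (fun k => b (min k L)) where
  start := by
    have hsub := toPath_eq_sub_single (L' := L + 1) (k' := 1) (L := L) (k := 0)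
      (by simpa using h.eq_add 0 (by omega))
    have hzero : toPath L R 0 = 0 := funext fun x => by simp [toPath, hR]
    rw [hzero, h.start] at hsub
    exact (sub_eq_zero.mp hsub.symm)
  start_row := by simpa using h.start
  dominant i hi k := by
    rw [gap, sub_nonneg, toPath, dif_pos (by omega), toPath, dif_pos (by omega)]
    exact hS.antitone _ (by omega) (Fin.mk_le_mk.mpr i.le_succ)
  mono k := by
    rcases Nat.lt_or_ge k L with hk | hk
    · rw [min_eq_left hk.le, min_eq_left (Nat.succ_le_of_lt hk)]
      exact h.mono k (by omega)
    · rw [min_eq_right hk, min_eq_right (Nat.le_succ_of_le hk)]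
  block k x hx hx' := by
    rcases Nat.lt_or_ge k L with hk | hk
    · rw [min_eq_left hk.le] at hx ⊢
      rw [min_eq_left (Nat.succ_le_of_lt hk)] at hx'
      have hanti := hS.antitone (k + 2) (by omega)
      have hxr : x < r := hx'.trans_lt (b (k + 1)).isLt
      lift x to Fin r using hxr
      rw [toPath_apply, toPath_apply, min_eq_left (by omega)]
      refine le_antisymm (hanti hx) ?_
      rw [h.block k (by omega)]
      exact hanti hx'
    · rw [min_eq_right hk] at hx ⊢
      rw [min_eq_right (Nat.le_succ_of_le hk)] at hx'
      rw [le_antisymm hx' hx]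
  corner k hk := by
    have hsucc : (b (min k L) : ℕ) + 1 < r := by omega
    change 0 < gap _ (toPath (L + 1) S) (k + 1)
    rw [gap_toPath _ _ _ hsucc, sub_pos, show min (k + 1) (L + 1) = min k L + 1 by omega]
    exact h.corner _ (by omega) _ (Fin.mk_lt_mk.mpr (Nat.lt_succ_self _))

lemma IsAddRow.pitmanEquiv (h : IsAddRow t S R b) (hS : IsOscillating t S) (hR : R 0 = 0) {L : ℕ}
    (hL : L < t) : PitmanEquiv (r - 1) (shift 1 (toPath (L + 1) S)) (toPath L R) := by
  have hslide := h.isSlide hS hR hL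
  have hshift : shift 1 (toPath (L + 1) S) =
      fun k => toPath (L + 1) S (k + 1) - Pi.single 0 1 :=
    funext fun k => congrArg _ hslide.start
  have hcycle : pitmanCycle (r - 1) (shift 1 (toPath (L + 1) S)) = toPath L R := by
    rw [hshift, hslide.pitmanCycle_eq le_rfl]
    funext k
    have hb := (b (min k L)).isLt
    rw [min_eq_left (by omega), ← toPath_eq_sub_single (L := L) (k := k) (R := R)]
    rw [show min (k + 1) (L + 1) = min k L + 1 by omega]
    exact h.eq_add _ (by omega)
  rw [← hcycle]
  exact .pitmanCycle ((hS.isUnitPath hL).shift 1) le_rfl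

lemma IsOscillating.pitmanEquiv_promo (hS : IsOscillating t S) {L : ℕ} (hL : L < t) :
    PitmanEquiv (r - 1) (shift 1 (toPath (L + 1) S)) (toPath L (promo t S)) := by
  obtain ⟨b, h⟩ | ⟨b, h⟩ := hS.exists_isAddRow (by omega)
  · exact h.pitmanEquiv hS ((promo_zero t S).trans hS.zero) hL
  · rw [← promo_varpiT] at h
    have hdual := (h.pitmanEquiv hS.varpiT ((promo_zero t _).trans hS.varpiT.zero) hL).reflect
    rw [promo_varpiT, toPath_varpiT, toPath_varpiT, reflect_reflect] at hdual
    rwa [shift_reflect, reflect_reflect] at hdual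

lemma PE_succ (t : ℕ) (S : ℕ → GP r) (u : ℕ) : PE t S (u + 1) = promo t (PE t S u) :=
  Function.iterate_succ_apply' _ _ _

lemma PE_self (t : ℕ) (S : ℕ → GP r) (u : ℕ) : PE t S u t = S t := by
  induction u with
  | zero => rfl
  | succ u ih => rw [PE_succ, promo_self, ih]

protected lemma IsOscillating.PE (hS : IsOscillating t S) (ht : 0 < t) (u : ℕ) :
    IsOscillating t (PE t S u) := by
  induction u with
  | zero => exact hS
  | succ u ih => rw [PE_succ]; exact ih.promo ht

lemma IsOscillating.pitmanEquiv_PE (hS : IsOscillating t S) (ht : 0 < t) (hu : u ≤ t) :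
    PitmanEquiv (r - 1) (shift u (toPath t S)) (toPath (t - u) (PE t S u)) := by
  induction u with
  | zero =>
    have hzero : shift 0 (toPath t S) = toPath t S := by
      funext k
      rw [shift, (hS.isUnitPath le_rfl).1, sub_zero, add_zero]
    rw [hzero]
    exact .refl _ _
  | succ u ih =>
    have hshift := (ih (by omega)).shift 1
    rw [shift_shift, add_comm 1 u] at hshift
    have hpromo := (hS.PE ht u).pitmanEquiv_promo (L := t - (u + 1)) (by omega)
    rw [show t - (u + 1) + 1 = t - u by omega, ← PE_succ] at hpromo
    exact hshift.trans hpromo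

/-- The part of a rectangular tableau after time `u` is a lowest weight path, so the row of the
growth diagram starting at `u` ends at the complement of `S u` in the rectangle. -/
lemma IsOscillating.PE_apply_sub (hS : IsOscillating t S) (ht : 0 < t) {m : ℤ}
    (hm : ∀ x, S t x = m) (hu : u ≤ t) (x : Fin r) :
    PE t S u (t - u) x = m - S u x.rev := by
  have hlow : ∀ i < r - 1, IsLowestAt i (t - u) (shift u (toPath t S)) := by
    intro i hi s hs
    have hdom : S (s + u) ⟨i + 1, by omega⟩ ≤ S (s + u) ⟨i, by omega⟩ :=
      hS.antitone _ (by omega) (Fin.mk_le_mk.mpr i.le_succ)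
    simp only [gap, shift, Pi.sub_apply, toPath, dif_pos (show i < r by omega),
      dif_pos (show i + 1 < r by omega), Nat.sub_add_cancel hu, min_self, hm,
      min_eq_left (show s + u ≤ t by omega)]
    omega
  have hdom : IsDominant (r - 1) (toPath (t - u) (PE t S u)) := by
    intro i hi k
    rw [gap_toPath _ _ _ (by omega), sub_nonneg]
    exact (hS.PE ht u).antitone _ (by omega) (Fin.mk_le_mk.mpr i.le_succ)
  have hlongest := (hS.pitmanEquiv_PE ht hu).pitmanLongest_eq.trans
    (hdom.pitmanLongest_eq ((hS.PE ht u).isUnitPath (Nat.sub_le t u)).1)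
  have hend := pitmanLongest_endpoint hlow (show (x : ℕ) ≤ r - 1 by omega)
  have hrev : r - 1 - (x : ℕ) = x.rev := by
    simp only [Fin.val_rev]; omega
  rw [hlongest, hrev, toPath_apply, min_self] at hend
  rw [hend, shift, Pi.sub_apply, toPath_apply, toPath_apply, Nat.sub_add_cancel hu, min_self, hm,
    min_eq_left hu]

lemma IsOscillating.PE_period (hS : IsOscillating t S) (ht : 0 < t) (hrect : Rect r t S)
    (ha : a ≤ t) : PE t S t a = S a := by
  obtain ⟨m, hm⟩ := hrect
  funext x
  have hadd : PE t (PE t S a) (t - a) = PE t S t := by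
    rw [PE, PE, PE, ← Function.iterate_add_apply, Nat.sub_add_cancel ha]
  have hend := (hS.PE ht a).PE_apply_sub ht (fun x => (congrFun (PE_self t S a) x).trans (hm x))
    (Nat.sub_le t a) x
  rw [hadd, Nat.sub_sub_self ha, hS.PE_apply_sub ht hm ha, Fin.rev_rev, sub_sub_cancel] at hend
  exact hend

end Periodicity

/-! ### Columns of the growth diagram -/

section PrefixSum

variable {r i : ℕ} {D E : GP r} {a b : Fin r}

lemma pSum_add (D E : GP r) (i : ℕ) : pSum (D + E) i = pSum D i + pSum E i :=
  Finset.sum_add_distrib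

lemma pSum_sub (D E : GP r) (i : ℕ) : pSum (D - E) i = pSum D i - pSum E i :=
  Finset.sum_sub_distrib _ _

lemma pSum_neg (D : GP r) (i : ℕ) : pSum (-D) i = -pSum D i :=
  Finset.sum_neg_distrib _

lemma pSum_eV (a : Fin r) (i : ℕ) : pSum (eV a) i = if (a : ℕ) < i then 1 else 0 := by
  simp [pSum, eV, Finset.sum_ite_eq']

lemma ne_add_eV_of_eq_add_eV (h : D = E + eV a) : E ≠ D + eV b := by
  intro h'
  have hsum := congrArg (pSum · r) (h.trans (congrArg (· + eV a) h'))
  simp only [pSum_add, pSum_eV, a.isLt, b.isLt, if_true] at hsum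
  omega

end PrefixSum

section Columns

variable {r t i u v s a : ℕ} {S : ℕ → GP r}

lemma IsOscillating.exists_row (hS : IsOscillating t S) (ht : 0 < t) :
    ∃ b : ℕ → Fin r,
      ((∀ k < t, S (k + 1) = promo t S k + eV (b k)) ∧ ∀ k, k + 1 < t → b k ≤ b (k + 1)) ∨
      ((∀ k < t, promo t S k = S (k + 1) + eV (b k)) ∧ ∀ k, k + 1 < t → b (k + 1) ≤ b k) := by
  obtain ⟨b, h⟩ | ⟨b, h⟩ := hS.exists_isAddRow ht
  · exact ⟨b, .inl ⟨h.eq_add, h.mono⟩⟩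
  · refine ⟨fun k => (b k).rev, .inr ⟨fun k hk => ?_, fun k hk => Fin.rev_le_rev.mpr (h.mono k hk)⟩⟩
    have hrow := congrArg revNeg (h.eq_add k hk)
    rw [revNeg_add, revNeg_eV, varpiT, varpiT, revNeg_revNeg, revNeg_revNeg] at hrow
    rw [hrow, neg_add_cancel_right]

lemma recorded_iff_of_add {a b : Fin r} (ha : PE t S (u - 1) (v - u) = PE t S u (v - u - 1) + eV a)
    (hb : PE t S (u - 1) (v - u + 1) = PE t S u (v - u) + eV b) :
    recorded r t S i u v ↔ (a : ℕ) < i ∧ i ≤ b := by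
  refine ⟨?_, fun h => ⟨a, b, .inl ⟨ha, hb, h⟩⟩⟩
  rintro ⟨a', b', ⟨ha', hb', h⟩ | ⟨ha', -⟩⟩
  · rwa [eV_injective (add_left_cancel (ha.symm.trans ha')),
      eV_injective (add_left_cancel (hb.symm.trans hb'))]
  · exact absurd ha' (ne_add_eV_of_eq_add_eV ha)

lemma recorded_iff_of_remove {a b : Fin r}
    (ha : PE t S u (v - u - 1) = PE t S (u - 1) (v - u) + eV a)
    (hb : PE t S u (v - u) = PE t S (u - 1) (v - u + 1) + eV b) :
    recorded r t S i u v ↔ (b : ℕ) < i ∧ i ≤ a := by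
  refine ⟨?_, fun h => ⟨a, b, .inr ⟨ha, hb, h⟩⟩⟩
  rintro ⟨a', b', ⟨ha', -⟩ | ⟨ha', hb', h⟩⟩
  · exact absurd ha' (ne_add_eV_of_eq_add_eV ha)
  · rwa [eV_injective (add_left_cancel (ha.symm.trans ha')),
      eV_injective (add_left_cancel (hb.symm.trans hb'))]

lemma not_recorded_self (r t : ℕ) (S : ℕ → GP r) (u v : ℕ) : ¬recorded r t S r u v := by
  rintro ⟨a, b, ⟨-, -, -, h⟩ | ⟨-, -, -, h⟩⟩
  exacts [h.not_gt b.isLt, h.not_gt a.isLt]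

/-- The number of boxes (with sign) that the step from column `v - 1` to column `v` in row `u` of
the growth diagram adds to the first `i` rows of the shape. Meaningful for `u < v ≤ u + t`. -/
def columnIncrement (t : ℕ) (S : ℕ → GP r) (i v u : ℕ) : ℤ :=
  pSum (PE t S u (v - u) - PE t S u (v - u - 1)) i

lemma IsOscillating.columnIncrement_succ (hS : IsOscillating t S) (huv : u + 1 < v)
    (hvu : v < u + 1 + t) :
    columnIncrement t S i v (u + 1) =
      columnIncrement t S i v u + if recorded r t S i (u + 1) v then 1 else 0 := by
  obtain ⟨k, rfl⟩ : ∃ k, v = k + 1 + (u + 1) := ⟨v - u - 2, by omega⟩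
  obtain ⟨b, ⟨hrow, hb⟩ | ⟨hrow, hb⟩⟩ := (hS.PE (by omega) u).exists_row (t := t) (by omega)
  all_goals
    rw [← PE_succ] at hrow
    have hk := hrow k (by omega)
    have hk' := hrow (k + 1) (by omega)
    have hle : (_ : ℕ) ≤ _ := hb k (by omega)
    simp only [columnIncrement, Nat.add_sub_cancel, pSum_sub,
      show k + 1 + (u + 1) - u = k + 1 + 1 by omega]
  · rw [recorded_iff_of_add (by simpa using hk) (by simpa using hk'), hk, hk']
    simp only [pSum_add, pSum_eV]
    split_ifs <;> omega
  · rw [recorded_iff_of_remove (by simpa using hk) (by simpa using hk'), hk, hk']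
    simp only [pSum_add, pSum_eV]
    split_ifs <;> omega

lemma IsOscillating.columnIncrement_eq_add_card (hS : IsOscillating t S) (has : a ≤ s) (hsv : s < v)
    (hva : v < a + 1 + t) :
    columnIncrement t S i v s = columnIncrement t S i v a +
      ((Finset.Ioc a s).filter fun u => recorded r t S i u v).card := by
  induction s, has using Nat.le_induction with
  | base => simp
  | succ s has ih =>
    rw [hS.columnIncrement_succ hsv (by omega), ih (by omega), ← Finset.sum_boole,
      ← Finset.sum_boole, Finset.sum_Ioc_succ_top has, add_assoc]

lemma IsOscillating.last_step (hS : IsOscillating t S) (ht : 0 < t) (hrect : Rect r t S) :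
    (∃ d : Fin r, S t = S (t - 1) + eV d ∧ (d : ℕ) + 1 = r) ∨
      ∃ d : Fin r, S (t - 1) = S t + eV d ∧ (d : ℕ) = 0 := by
  obtain ⟨m, hm⟩ := hrect
  have hanti := hS.antitone (t - 1) (by omega)
  obtain ⟨d, hd | hd⟩ := hS.step (t - 1) (by omega) <;> rw [Nat.sub_add_cancel ht] at hd
  · have hdual : revNeg (S (t - 1)) = revNeg (S t) + eV d.rev := by
      rw [hd, revNeg_add, revNeg_eV, neg_add_cancel_right]
    have hrev := val_eq_zero_of_antitone_add_eV (m := -m) (fun x => congrArg Neg.neg (hm x.rev))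
      (hdual ▸ antitone_revNeg hanti)
    rw [Fin.val_rev] at hrev
    exact .inl ⟨d, hd, by omega⟩
  · exact .inr ⟨d, hd, val_eq_zero_of_antitone_add_eV hm (hd ▸ hanti)⟩

/-- The last step of a rectangular tableau either adds the bottom box or removes the top one, so
its size determines its effect on the first `i` rows. -/
lemma IsOscillating.columnIncrement_start (hS : IsOscillating t S) (ht : 0 < t)
    (hrect : Rect r t S) (a : ℕ) (hi : 1 ≤ i) (hir : i < r) :
    2 * columnIncrement t S i (a + t) a = columnIncrement t S r (a + t) a - 1 := by
  have hrectA : Rect r t (PE t S a) := hrect.imp fun m hm => by rwa [PE_self]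
  simp only [columnIncrement, Nat.add_sub_cancel_left]
  obtain ⟨d, hd, hd'⟩ | ⟨d, hd, hd'⟩ := (hS.PE ht a).last_step ht hrectA <;>
  · rw [hd]
    simp only [pSum_sub, pSum_add, pSum_eV]
    split_ifs <;> omega

lemma IsOscillating.columnIncrement_end (hS : IsOscillating t S) (hrect : Rect r t S) (ha : 1 ≤ a)
    (hat : a ≤ t) : columnIncrement t S i (a + t) t = pSum (S a - S (a - 1)) i := by
  rw [columnIncrement, Nat.add_sub_cancel, hS.PE_period (by omega) hrect hat,
    hS.PE_period (by omega) hrect (by omega)]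

lemma IsOscillating.two_mul_card_recorded (hS : IsOscillating t S) (hrect : Rect r t S)
    (hi : 1 ≤ i) (hir : i < r) (ha : 1 ≤ a) (hat : a ≤ t) :
    2 * (((Finset.Ioc a t).filter fun u => recorded r t S i u (a + t)).card : ℤ) =
      2 * pSum (S a - S (a - 1)) i + 1 - pSum (S a - S (a - 1)) r := by
  have hcount (i : ℕ) := hS.columnIncrement_eq_add_card (i := i) hat (v := a + t) (by omega)
    (by omega)
  simp only [hS.columnIncrement_end hrect ha hat] at hcount
  have hcount_r := hcount r
  simp only [not_recorded_self, Finset.filter_false, Finset.card_empty, Nat.cast_zero,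
    add_zero] at hcount_r
  have hstart := hS.columnIncrement_start (by omega) hrect a hi hir
  linarith [hcount i]

theorem IsOscillating.exists_recorded_iff (hS : IsOscillating t S) (hrect : Rect r t S)
    (hi : 1 ≤ i) (hir : i < r) (ha : 1 ≤ a) (hat : a ≤ t) :
    (∃ u, a < u ∧ u ≤ t ∧ recorded r t S i u (a + t)) ↔
      ∃ j : Fin r, (S a = S (a - 1) + eV j ∧ (j : ℕ) + 1 ≤ i) ∨
        (S (a - 1) = S a + eV j ∧ i < (j : ℕ) + 1) := by
  have hexists : (∃ u, a < u ∧ u ≤ t ∧ recorded r t S i u (a + t)) ↔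
      0 < ((Finset.Ioc a t).filter fun u => recorded r t S i u (a + t)).card := by
    simp only [Finset.card_pos, Finset.Nonempty, Finset.mem_filter, Finset.mem_Ioc, and_assoc]
  have hcard := hS.two_mul_card_recorded hrect hi hir ha hat
  rw [hexists]
  obtain ⟨d, hd | hd⟩ := hS.step (a - 1) (by omega) <;> rw [Nat.sub_add_cancel ha] at hd
  · have hrow : (∃ j : Fin r, (S a = S (a - 1) + eV j ∧ (j : ℕ) + 1 ≤ i) ∨
        (S (a - 1) = S a + eV j ∧ i < (j : ℕ) + 1)) ↔ (d : ℕ) < i := by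
      refine ⟨?_, fun h => ⟨d, .inl ⟨hd, h⟩⟩⟩
      rintro ⟨j, ⟨hj, h⟩ | ⟨hj, -⟩⟩
      · rwa [eV_injective (add_left_cancel (hd.symm.trans hj))]
      · exact absurd hj (ne_add_eV_of_eq_add_eV hd)
    rw [hrow]
    rw [hd, add_sub_cancel_left, pSum_eV, pSum_eV, if_pos d.isLt] at hcard
    split_ifs at hcard <;> omega
  · have hrow : (∃ j : Fin r, (S a = S (a - 1) + eV j ∧ (j : ℕ) + 1 ≤ i) ∨
        (S (a - 1) = S a + eV j ∧ i < (j : ℕ) + 1)) ↔ i ≤ (d : ℕ) := by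
      refine ⟨?_, fun h => ⟨d, .inr ⟨hd, Nat.lt_succ_of_le h⟩⟩⟩
      rintro ⟨j, ⟨hj, -⟩ | ⟨hj, h⟩⟩
      · exact absurd hj (ne_add_eV_of_eq_add_eV hd)
      · rwa [eV_injective (add_left_cancel (hd.symm.trans hj)), ← Nat.lt_succ_iff]
    rw [hrow]
    rw [hd, sub_add_cancel_left, pSum_neg, pSum_neg, pSum_eV, pSum_eV, if_pos d.isLt] at hcard
    split_ifs at hcard <;> omega

end Columns

/-! ### Oscillization -/

section Rank

variable {α : Type*} [LinearOrder α] {r j : ℕ}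

/-- The rank of `x` in `A`, counted from the smallest element; the minimum has rank `1`. -/
def rankIn (A : Finset α) (x : α) : ℕ := (A.filter (· ≤ x)).card

lemma rankIn_mono (A : Finset α) : Monotone (rankIn A) := fun _ _ hxy =>
  Finset.card_le_card (Finset.monotone_filter_right _ fun _ _ hz => hz.trans hxy)

lemma rankIn_strictMonoOn (A : Finset α) : StrictMonoOn (rankIn A) A := fun x _ y hy hxy => by
  refine Finset.card_lt_card (Finset.ssubset_iff_of_subset
    (Finset.monotone_filter_right _ fun _ _ hz => hz.trans hxy.le) |>.mpr ⟨y, ?_, ?_⟩)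
  · exact Finset.mem_filter.mpr ⟨hy, le_rfl⟩
  · exact fun hy' => (Finset.mem_filter.mp hy').2.not_gt hxy

lemma rankIn_le_card (A : Finset α) (x : α) : rankIn A x ≤ A.card := Finset.card_filter_le _ _

lemma rankIn_pos {A : Finset α} {x : α} (hx : x ∈ A) : 0 < rankIn A x :=
  Finset.card_pos.mpr ⟨x, Finset.mem_filter.mpr ⟨hx, le_rfl⟩⟩

lemma image_rankIn (A : Finset α) : A.image (rankIn A) = Finset.Icc 1 A.card := by
  refine Finset.eq_of_subset_of_card_le (Finset.image_subset_iff.mpr fun x hx =>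
    Finset.mem_Icc.mpr ⟨rankIn_pos hx, rankIn_le_card A x⟩) ?_
  rw [Finset.card_image_of_injOn (rankIn_strictMonoOn A).injOn, Nat.card_Icc, Nat.add_sub_cancel]

lemma exists_indV_filter_rankIn_succ {A : Finset (Fin r)} (hj : j < A.card) :
    ∃ x, (indV (A.filter fun y => rankIn A y ≤ j + 1) : GP r) =
      indV (A.filter fun y => rankIn A y ≤ j) + eV x := by
  obtain ⟨x, hx, hrank⟩ := Finset.mem_image.mp
    ((image_rankIn A).symm ▸ Finset.mem_Icc.mpr ⟨Nat.le_add_left 1 j, hj⟩)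
  refine ⟨x, funext fun y => ?_⟩
  have hiff (hy : y ∈ A) : y = x ↔ rankIn A y = j + 1 :=
    hrank ▸ ((rankIn_strictMonoOn A).injOn.eq_iff hy hx).symm
  simp only [indV, eV, Pi.add_apply, Finset.mem_filter]
  grind

end Rank

section OscStep

variable {r j : ℕ} {μ lam : GP r} {c : ℤ}

lemma oscStep_zero (μ lam : GP r) : oscStep μ lam 0 = μ := by
  funext x
  refine if_neg fun ⟨hx, hcard⟩ => ?_
  split_ifs at hcard
  all_goals
    rw [Nat.le_zero, Finset.card_eq_zero, Finset.filter_eq_empty_iff] at hcard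
    exact hcard hx le_rfl

lemma oscStep_card (μ lam : GP r) :
    oscStep μ lam (Finset.univ.filter fun x : Fin r => lam x ≠ μ x).card = lam := by
  funext x
  by_cases hx : lam x = μ x
  · simp only [oscStep, hx, ite_self]
  · refine if_pos ⟨Finset.mem_filter.mpr ⟨Finset.mem_univ x, hx⟩, ?_⟩
    split_ifs <;> exact Finset.card_filter_le _ _

lemma oscStep_revNeg (μ lam : GP r) (j : ℕ) :
    oscStep (revNeg μ) (revNeg lam) j = revNeg (oscStep μ lam j) := by
  have hcard (p : Fin r → Prop) [DecidablePred p] :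
      ((Finset.univ.filter fun y : Fin r => revNeg lam y ≠ revNeg μ y).filter p).card =
        ((Finset.univ.filter fun y : Fin r => lam y ≠ μ y).filter fun y => p y.rev).card := by
    refine Finset.card_nbij' Fin.rev Fin.rev ?_ ?_ ?_ ?_ <;> intro y <;> simp [revNeg]
  have hle (x y : Fin r) : x ≤ y.rev ↔ y ≤ x.rev := by
    rw [← Fin.rev_le_rev, Fin.rev_rev]
  funext x
  change oscStep (revNeg μ) (revNeg lam) j x = -oscStep μ lam j x.rev
  have hlt : revNeg μ x < revNeg lam x ↔ lam x.rev < μ x.rev := neg_lt_neg_iff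
  have hne : revNeg lam x ≠ revNeg μ x ↔ lam x.rev ≠ μ x.rev := neg_injective.ne_iff
  simp only [oscStep, hcard, hlt, Finset.mem_filter, Finset.mem_univ, true_and, hne,
    Fin.rev_le_iff, hle x]
  rcases lt_trichotomy (μ x.rev) (lam x.rev) with h | h | h
  · simp only [h, h.not_gt, if_true, if_false, revNeg, apply_ite Neg.neg]
  · simp only [h, ne_eq, not_true, false_and, if_false, revNeg]
  · simp only [h, h.not_gt, if_true, if_false, revNeg, apply_ite Neg.neg]

lemma filter_add_indV_ne (μ : GP r) (A : Finset (Fin r)) :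
    (Finset.univ.filter fun x => (μ + indV A) x ≠ μ x) = A := by
  ext x
  simp [indV]

lemma oscStep_add_indV (μ : GP r) (A : Finset (Fin r)) (j : ℕ) :
    oscStep μ (μ + indV A) j = μ + indV (A.filter fun x => rankIn A x ≤ j) := by
  funext x
  simp only [oscStep, filter_add_indV_ne]
  have hmem : x ∈ A.filter (fun y => rankIn A y ≤ j) ↔ x ∈ A ∧ rankIn A x ≤ j :=
    Finset.mem_filter
  have hrank : (A.filter fun y => y ≤ x).card = rankIn A x := rfl
  by_cases hx : x ∈ A <;> simp [indV, hmem, hx, hrank, add_ite]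

lemma antitone_oscStep_add_indV {A : Finset (Fin r)} (hμ : Antitone μ)
    (hlam : Antitone (μ + indV A)) (j : ℕ) : Antitone (oscStep μ (μ + indV A) j) := by
  intro x y hxy
  have hle := hμ hxy
  have hle' := hlam hxy
  have hrank := rankIn_mono A hxy
  simp only [oscStep_add_indV, Pi.add_apply, indV, Finset.mem_filter] at hle' ⊢
  grind

lemma isUnitStep_oscStep_add_indV {A : Finset (Fin r)} (hj : j < A.card) :
    IsUnitStep (oscStep μ (μ + indV A) j) (oscStep μ (μ + indV A) (j + 1)) := by
  obtain ⟨x, hx⟩ := exists_indV_filter_rankIn_succ hj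
  exact ⟨x, .inl (by rw [oscStep_add_indV, oscStep_add_indV, hx, add_assoc])⟩

namespace colStep

lemma exists_eq_add_indV (h : colStep r c μ lam) : ∃ A : Finset (Fin r), A.card = c.natAbs ∧
    (lam = μ + indV A ∨ revNeg lam = revNeg μ + indV A) := by
  obtain ⟨A, hA, h⟩ := h
  split_ifs at h
  · exact ⟨A, hA, .inl h⟩
  · refine ⟨A.map Fin.revPerm.toEmbedding, by rw [Finset.card_map, hA], .inr ?_⟩
    funext x
    have hmem : x ∈ A.map Fin.revPerm.toEmbedding ↔ x.rev ∈ A := by simp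
    simp only [h, revNeg, indV, Pi.add_apply, Pi.sub_apply, hmem]
    ring

lemma card_filter_ne (h : colStep r c μ lam) :
    (Finset.univ.filter fun x : Fin r => lam x ≠ μ x).card = c.natAbs := by
  obtain ⟨A, hA, h⟩ := h
  rw [← hA]
  congr 1
  ext x
  split_ifs at h <;> simp [h, indV]

lemma antitone_oscStep (h : colStep r c μ lam) (hμ : Antitone μ) (hlam : Antitone lam) (j : ℕ) :
    Antitone (oscStep μ lam j) := by
  obtain ⟨A, -, rfl | h⟩ := h.exists_eq_add_indV
  · exact antitone_oscStep_add_indV hμ hlam j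
  · rw [← revNeg_revNeg (oscStep μ lam j), ← oscStep_revNeg, h]
    exact antitone_revNeg (antitone_oscStep_add_indV (antitone_revNeg hμ)
      (h ▸ antitone_revNeg hlam) j)

lemma isUnitStep_oscStep (h : colStep r c μ lam) (hj : j < c.natAbs) :
    IsUnitStep (oscStep μ lam j) (oscStep μ lam (j + 1)) := by
  obtain ⟨A, hA, rfl | h⟩ := h.exists_eq_add_indV
  · exact isUnitStep_oscStep_add_indV (hA ▸ hj)
  · have hdual := (isUnitStep_oscStep_add_indV (μ := revNeg μ) (hA ▸ hj)).revNeg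
    rwa [← h, oscStep_revNeg, oscStep_revNeg, revNeg_revNeg, revNeg_revNeg] at hdual

end colStep

end OscStep

section StdT

variable {r n j k : ℕ} {T : ℕ → GP r} {c : ℕ → ℤ}

lemma cum_succ (T : ℕ → GP r) (j : ℕ) : cum T (j + 1) = cum T j + stepSize T j :=
  Finset.sum_range_succ _ _

lemma cum_mono (T : ℕ → GP r) : Monotone (cum T) :=
  monotone_nat_of_le_succ fun j => by rw [cum_succ]; exact Nat.le_add_right _ _

lemma isGreatest_stdIdx (n : ℕ) (T : ℕ → GP r) (k : ℕ) :
    IsGreatest {j | j ≤ n ∧ cum T j ≤ k} (stdIdx n T k) := by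
  have hmem (j : ℕ) : j ∈ (Finset.range (n + 1)).filter (fun j => cum T j ≤ k) ↔
      j ≤ n ∧ cum T j ≤ k := by
    rw [Finset.mem_filter, Finset.mem_range, Nat.lt_succ_iff]
  obtain ⟨x, hx, hsup⟩ := Finset.exists_mem_eq_sup _ ⟨0, (hmem 0).mpr ⟨n.zero_le, k.zero_le⟩⟩ id
  exact ⟨(congrArg (· ∈ _) hsup).mpr ((hmem x).mp hx),
    fun j hj => Finset.le_sup (f := id) ((hmem j).mpr hj)⟩

lemma stdIdx_eq_of_mem_Ico (hj : j < n) (hle : cum T j ≤ k) (hlt : k < cum T (j + 1)) :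
    stdIdx n T k = j := by
  refine (isGreatest_stdIdx n T k).unique ⟨⟨hj.le, hle⟩, fun j' hj' => ?_⟩
  by_contra! hjj'
  exact hlt.not_ge ((cum_mono T hjj').trans hj'.2)

lemma exists_mem_Ico_cum (hk : k < cum T n) : ∃ j < n, cum T j ≤ k ∧ k < cum T (j + 1) := by
  obtain ⟨⟨hle, hcum⟩, hmax⟩ := isGreatest_stdIdx n T k
  have hlt : stdIdx n T k < n := hle.lt_of_ne fun h => (h ▸ hcum).not_gt hk
  refine ⟨_, hlt, hcum, ?_⟩
  by_contra! h
  exact (Nat.lt_succ_self _).not_ge (hmax ⟨hlt, h⟩)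

lemma eq_of_cum_eq {j' : ℕ} (hj : j ≤ j') (h : cum T j' = cum T j) : T j' = T j := by
  induction j', hj using Nat.le_induction with
  | base => rfl
  | succ j' hj ih =>
    have hmono := cum_mono T hj
    rw [cum_succ] at h
    have hsize : stepSize T j' = 0 := by omega
    rw [stepSize, Finset.card_eq_zero, Finset.filter_eq_empty_iff] at hsize
    rw [← ih (by omega)]
    exact funext fun x => not_not.mp (hsize (Finset.mem_univ x))

lemma stdT_cum (T : ℕ → GP r) (hj : j ≤ n) : stdT n T (cum T j) = T j := by
  obtain ⟨⟨-, hle⟩, hmax⟩ := isGreatest_stdIdx n T (cum T j)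
  have hj' := hmax ⟨hj, le_rfl⟩
  have hcum := hle.antisymm (cum_mono T hj')
  rw [← eq_of_cum_eq hj' hcum, stdT, hcum, Nat.sub_self, oscStep_zero]
  split_ifs with h
  · rw [h]
  · rfl

lemma stdT_cum_add (T : ℕ → GP r) (hj : j < n) (hk : k ≤ stepSize T j) :
    stdT n T (cum T j + k) = oscStep (T j) (T (j + 1)) k := by
  rcases hk.eq_or_lt with rfl | hlt
  · rw [← cum_succ, stdT_cum T hj]
    exact (oscStep_card _ _).symm
  · rw [stdT, stdIdx_eq_of_mem_Ico hj (Nat.le_add_right _ _)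
      (by rw [cum_succ]; exact Nat.add_lt_add_left hlt _), if_neg hj.ne, Nat.add_sub_cancel_left]

namespace IsFT

lemma stepSize_eq (hT : IsFT r n T c) (hj : j < n) : stepSize T j = (c j).natAbs :=
  (hT.1.2 j hj).card_filter_ne

lemma cum_eq (hT : IsFT r n T c) (hj : j ≤ n) :
    cum T j = ∑ k ∈ Finset.range j, (c k).natAbs :=
  Finset.sum_congr rfl fun _ hk => hT.stepSize_eq ((Finset.mem_range.mp hk).trans_le hj)

lemma isOscillating_stdT (hT : IsFT r n T c) : IsOscillating (cum T n) (stdT n T) where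
  zero := (stdT_cum T n.zero_le).trans hT.2
  antitone k hk := by
    rcases hk.eq_or_lt with rfl | hlt
    · rw [stdT_cum T le_rfl]
      exact hT.1.1 n le_rfl
    · obtain ⟨j, hj, hle, hlt⟩ := exists_mem_Ico_cum hlt
      obtain ⟨k, rfl⟩ := Nat.exists_eq_add_of_le hle
      rw [cum_succ, Nat.add_lt_add_iff_left] at hlt
      rw [stdT_cum_add T hj hlt.le]
      exact (hT.1.2 j hj).antitone_oscStep (hT.1.1 j hj.le) (hT.1.1 (j + 1) hj) k
  step k hk := by
    obtain ⟨j, hj, hle, hlt⟩ := exists_mem_Ico_cum hk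
    obtain ⟨k, rfl⟩ := Nat.exists_eq_add_of_le hle
    rw [cum_succ, Nat.add_lt_add_iff_left] at hlt
    rw [add_assoc, stdT_cum_add T hj hlt.le, stdT_cum_add T hj hlt]
    exact (hT.1.2 j hj).isUnitStep_oscStep (hT.stepSize_eq hj ▸ hlt)

lemma cum_eq_self_of_standard (hT : IsFT r n T c) (hc : ∀ j < n, c j = 1) (hk : k ≤ n) :
    cum T k = k := by
  rw [hT.cum_eq hk, Finset.sum_congr rfl fun j hj => congrArg Int.natAbs
    (hc j ((Finset.mem_range.mp hj).trans_le hk)), Finset.sum_const, Finset.card_range]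
  exact mul_one k

lemma stdT_eq_of_standard (hT : IsFT r n T c) (hc : ∀ j < n, c j = 1) (hk : k ≤ n) :
    stdT n T k = T k := by
  simpa only [hT.cum_eq_self_of_standard hc hk] using stdT_cum T hk

lemma ne_add_eV_of_standard (hT : IsFT r n T c) (hc : ∀ j < n, c j = 1) (hk : k < n) (x : Fin r) :
    T k ≠ T (k + 1) + eV x := by
  intro h
  obtain ⟨A, -, hA⟩ := hT.1.2 k hk
  rw [hc k hk, if_pos zero_le_one] at hA
  have hx := congrFun h x
  rw [hA] at hx
  simp only [Pi.add_apply, eV_self, indV] at hx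
  split_ifs at hx <;> omega

end IsFT

lemma PMmem_iff_of_lt {t i u a : ℕ} (hi : 1 ≤ i) (hir : i ≤ r - 1) (ha : 1 ≤ a) (hau : a < u)
    (hut : u ≤ t) : PMmem r n t T i u a ↔ recorded r t (stdT n T) i u (a + t) := by
  rw [PMmem, if_neg hau.not_gt]
  exact ⟨fun h => h.2.2.2.2.2.2.2, fun h => ⟨by omega, hut, ha, by omega, hau.ne', hi, hir, h⟩⟩

end StdT

/-- **Theorem (antiexcedances).** Let `T` be an `r`-row rectangular fluctuating tableau
with `t = Σ|c_j| ≥ 1` and oscillization `std(T) = (μ^0,…,μ^t)`.  For `1 ≤ i ≤ r-1` and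
`a ∈ {1,…,t}`, `a` is an antiexcedance of `prom_i(T)` (i.e. `prom_i(T)⁻¹(a) > a`,
expressed as: some `u > a` has `prom_i(T)(u) = a`) iff either the `a`-th step of
`std(T)` adds a box in one of the top `i` rows, or removes a box from one of the
bottom `r-i` rows.  In particular, for standard type `(1,…,1)` the antiexcedances of
`prom_i(T)` are exactly the entries in the first `i` rows of `T`. -/
theorem antiexcedances_of_promotion_permutations
    (r n t : ℕ) (T : ℕ → GP r) (c : ℕ → ℤ)
    (hT : IsFT r n T c) (hrect : Rect r n T)
    (ht : t = ∑ j ∈ Finset.range n, (c j).natAbs) (ht1 : 1 ≤ t) :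
    ∀ i, 1 ≤ i → i ≤ r - 1 → ∀ a, 1 ≤ a → a ≤ t →
      ((∃ u, a < u ∧ u ≤ t ∧ PMmem r n t T i u a) ↔
        ∃ j : Fin r,
          (stdT n T a = stdT n T (a - 1) + eV j ∧ (j : ℕ) + 1 ≤ i) ∨
          (stdT n T (a - 1) = stdT n T a + eV j ∧ i < (j : ℕ) + 1)) ∧
      ((∀ j < n, c j = 1) →
        ((∃ u, a < u ∧ u ≤ t ∧ PMmem r n t T i u a) ↔
          ∃ j : Fin r, T a = T (a - 1) + eV j ∧ (j : ℕ) + 1 ≤ i)) := by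
  intro i hi hir a ha hat
  obtain rfl : t = cum T n := ht.trans (hT.cum_eq le_rfl).symm
  have hrect' : Rect r (cum T n) (stdT n T) := by rwa [Rect, stdT_cum T le_rfl]
  have hmain := hT.isOscillating_stdT.exists_recorded_iff hrect' hi (by omega) ha hat
  have hPM : (∃ u, a < u ∧ u ≤ cum T n ∧ PMmem r n (cum T n) T i u a) ↔ _ :=
    (exists_congr fun u => and_congr_right fun hau => and_congr_right fun hut =>
      PMmem_iff_of_lt hi hir ha hau hut).trans hmain
  refine ⟨hPM, fun hc => hPM.trans ?_⟩
  have hn : cum T n = n := hT.cum_eq_self_of_standard hc le_rfl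
  rw [hT.stdT_eq_of_standard hc (by omega), hT.stdT_eq_of_standard hc (by omega)]
  refine exists_congr fun j => or_iff_left fun h => ?_
  exact hT.ne_add_eV_of_standard hc (k := a - 1) (by omega) j
    (by rw [Nat.sub_add_cancel ha]; exact h.1)

end FT
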